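/- arXiv:1909.11027 — 2 statements merged into one kernel-verified Lean document; each statement's English description precedes it below -/
import Mathlib

section
/- Let S = {1234, 1243, 1432, 2134, 2143, 2341, 3214, 3412, 3421, 4123, 4312, 4321}. For every permuton μ it holds that Σ_{π∈S} d(π,μ) ≥ 1/2, and equality holds if and only if μ is the uniform permuton. -/
open MeasureTheory Filter

noncomputable section

/-- A permuton: a Borel probability measure on `ℝ × ℝ` (supported on `[0,1]²`)
with uniform marginals. -/
def IsPermuton (μ : Measure (ℝ × ℝ)) : Prop :=
  IsProbabilityMeasure μ ∧
    (∀ x x' : ℝ, 0 ≤ x → x ≤ x' → x' ≤ 1 →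
      μ (Set.Icc x x' ×ˢ Set.Icc (0 : ℝ) 1) = ENNReal.ofReal (x' - x)) ∧
    (∀ y y' : ℝ, 0 ≤ y → y ≤ y' → y' ≤ 1 →
      μ (Set.Icc (0 : ℝ) 1 ×ˢ Set.Icc y y') = ENNReal.ofReal (y' - y))

/-- The uniform permuton: two-dimensional Lebesgue measure on `[0,1]²`. -/
def uniformPermuton : Measure (ℝ × ℝ) :=
  volume.restrict (Set.Icc (0 : ℝ) 1 ×ˢ Set.Icc (0 : ℝ) 1)

/-- The support of a Borel measure: all points each of whose open neighbourhoods has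
positive measure. -/
def measSupport (μ : Measure (ℝ × ℝ)) : Set (ℝ × ℝ) :=
  {p | ∀ U : Set (ℝ × ℝ), IsOpen U → p ∈ U → 0 < μ U}

/-- The pattern density of a `k`-permutation `π` in a measure `μ` on `ℝ × ℝ`:
the `μ^{⊗ k}`-probability that `k` sampled points, relabelled so that their
`x`-coordinates increase, have `y`-coordinates ordered according to `π`. -/
def PermutonDensity {k : ℕ} (π : Equiv.Perm (Fin k)) (μ : Measure (ℝ × ℝ)) : ℝ :=
  ((Measure.pi fun _ : Fin k => μ)
    {p : Fin k → ℝ × ℝ | ∃ σ : Equiv.Perm (Fin k),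
      StrictMono (fun i => (p (σ i)).1) ∧
        ∀ i j : Fin k, (p (σ i)).2 < (p (σ j)).2 ↔ π i < π j}).toReal

open scoped Classical in
/-- The pattern density of a `k`-permutation `π` in an `n`-permutation `Π`:
the proportion of `k`-element subsets of `Fin n` on which `Π` induces the pattern `π`
(zero when `n < k`). -/
def PatternDensity {k n : ℕ} (π : Equiv.Perm (Fin k)) (Perm : Equiv.Perm (Fin n)) : ℝ :=
  ((Finset.univ.filter fun A : Finset (Fin n) =>
      ∃ h : A.card = k, ∀ i j : Fin k,
        Perm ↑(A.orderIsoOfFin h i) < Perm ↑(A.orderIsoOfFin h j) ↔ π i < π j).card : ℝ) /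
    (n.choose k)

/-- A sequence of permutations (of varying orders) is quasirandom if the density of every
pattern `π` converges to `1/|π|!`. -/
def Quasirandom (P : ℕ → (n : ℕ) × Equiv.Perm (Fin n)) : Prop :=
  ∀ (k : ℕ) (π : Equiv.Perm (Fin k)),
    Tendsto (fun i => PatternDensity π (P i).2) atTop (nhds (1 / (Nat.factorial k : ℝ)))

/-- A set `S` of `k`-permutations is `Σ`-forcing if a sequence of permutations is quasirandom
exactly when the sum of the densities of the patterns from `S` converges to `|S|/k!`. -/
def SigmaForcing {k : ℕ} (S : Finset (Equiv.Perm (Fin k))) : Prop :=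
  ∀ P : ℕ → (n : ℕ) × Equiv.Perm (Fin n),
    Quasirandom P ↔
      Tendsto (fun i => ∑ π ∈ S, PatternDensity π (P i).2) atTop
        (nhds ((S.card : ℝ) / (Nat.factorial k : ℝ)))

/-- The `4`-permutation written in one-line notation as `(a+1)(b+1)(c+1)(d+1)`
(inputs are 0-indexed). -/
def mk4 (a b c d : Fin 4) (h : Function.Bijective ![a, b, c, d] := by decide) :
    Equiv.Perm (Fin 4) :=
  Equiv.ofBijective _ h

/-- A doubly stochastic matrix: non-negative entries, all row and column sums equal to one. -/
def IsDoublyStochastic {n : ℕ} (A : Matrix (Fin n) (Fin n) ℝ) : Prop :=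
  (∀ i j, 0 ≤ A i j) ∧ (∀ i, ∑ j, A i j = 1) ∧ (∀ j, ∑ i, A i j = 1)

/-- The step permuton `μ[A]` associated with an `n × n` doubly stochastic matrix `A`. -/
def stepPermuton {n : ℕ} (A : Matrix (Fin n) (Fin n) ℝ) : Measure (ℝ × ℝ) :=
  ∑ i : Fin n, ∑ j : Fin n,
    ENNReal.ofReal (A i j * n) •
      volume.restrict
        (Set.Ico ((i : ℝ) / n) (((i : ℝ) + 1) / n) ×ˢ
          Set.Ico ((j : ℝ) / n) (((j : ℝ) + 1) / n))

/-- The matrix `B^{ij}` (0-indexed: `p, q ∈ [n-1]`): `+1` at positions `(p,q)` and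
`(p+1,q+1)`, `-1` at positions `(p,q+1)` and `(p+1,q)`, `0` elsewhere. -/
def Bmat (n : ℕ) (p q : Fin (n - 1)) : Matrix (Fin n) (Fin n) ℝ := fun a b =>
  (if (a : ℕ) = (p : ℕ) ∧ (b : ℕ) = (q : ℕ) then 1 else 0) +
    (if (a : ℕ) = (p : ℕ) + 1 ∧ (b : ℕ) = (q : ℕ) + 1 then 1 else 0) -
    (if (a : ℕ) = (p : ℕ) ∧ (b : ℕ) = (q : ℕ) + 1 then 1 else 0) -
    (if (a : ℕ) = (p : ℕ) + 1 ∧ (b : ℕ) = (q : ℕ) then 1 else 0)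

/-- The matrix `A + ∑_{i,j} x_{ij} B^{ij}` where `A` is the `n × n` matrix with all
entries `1/n`. -/
def pertMatrix (n : ℕ) (x : Fin (n - 1) × Fin (n - 1) → ℝ) : Matrix (Fin n) (Fin n) ℝ :=
  fun a b => 1 / n + ∑ p : Fin (n - 1) × Fin (n - 1), x p * Bmat n p.1 p.2 a b

/-- The function `h_{S,n}`: the sum over `π ∈ S` of the pattern density of `π` in the
step permuton of the perturbed matrix. -/
def hSN (n : ℕ) (S : Finset (Equiv.Perm (Fin 4))) (x : Fin (n - 1) × Fin (n - 1) → ℝ) : ℝ :=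
  ∑ π ∈ S, PermutonDensity π (stepPermuton (pertMatrix n x))

open scoped Classical in
/-- The cover matrix of a set `S` of `4`-permutations: `C i j` is the number of `π ∈ S`
with `π j = i`. -/
def coverMatrix (S : Finset (Equiv.Perm (Fin 4))) : Fin 4 → Fin 4 → ℕ := fun i j =>
  (S.filter fun π => π j = i).card

/-- The eight symmetry operations on `4`-permutations. -/
def symOps : List (Equiv.Perm (Fin 4) → Equiv.Perm (Fin 4)) :=
  [fun σ => σ,
   fun σ => σ * Fin.revPerm,
   fun σ => Fin.revPerm * σ,
   fun σ => Fin.revPerm * σ * Fin.revPerm,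
   fun σ => σ⁻¹,
   fun σ => σ⁻¹ * Fin.revPerm,
   fun σ => Fin.revPerm * σ⁻¹,
   fun σ => Fin.revPerm * σ⁻¹ * Fin.revPerm]

open scoped Classical in
/-- `T` is symmetric to `S` if one of the eight symmetry operations maps `S` onto `T`. -/
def SymmetricSets (S T : Finset (Equiv.Perm (Fin 4))) : Prop :=
  ∃ op ∈ symOps, T = S.image op

end

noncomputable section

/-! A random point of `μ` carries two linear orders, that of its first and that of its second
coordinate; let `S` and `T` be their sign kernels. A polynomial of degree eight in the signs of
four points, symmetrised over the labels of the points, takes one value on the twelve patterns and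
the opposite value on the other twelve. Hence the sum of the twelve densities is an affine
function of the expectation of this polynomial.

To compute the expectation, write `∫ S p z * T q z` as a doubly centered gram matrix `D p q` plus
terms in one variable, built from the two scores. Transitivity makes `g ↦ ∫ S · z * g z` an
antiderivative, so integration by parts reduces all mixed moments to those of `D` and of the
one-variable terms, and these combine into a sum of squares. This gives the inequality. In the
equality case `D` vanishes almost everywhere, and the same integration by parts upgrades this to
`cov[S p, T q; μ] = 0` for all `p` and `q`, which says that the two coordinates are independent.
-/

/-- Measurability together with a uniform bound: a class of functions that is closed under
products and under integration in a parameter, so that integrability side goals are automatic. -/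
@[fun_prop]
def BoundedMeasurable {α : Type*} [MeasurableSpace α] (f : α → ℝ) : Prop :=
  Measurable f ∧ ∃ C : ℝ, ∀ x, |f x| ≤ C

namespace BoundedMeasurable

variable {α β γ : Type*} [MeasurableSpace α] [MeasurableSpace β] [MeasurableSpace γ]

section Algebra

variable {f g : α → ℝ}

@[fun_prop]
theorem const (c : ℝ) : BoundedMeasurable fun _ : α => c :=
  ⟨measurable_const, |c|, fun _ => le_rfl⟩

@[fun_prop]
theorem add (hf : BoundedMeasurable f) (hg : BoundedMeasurable g) :
    BoundedMeasurable fun x => f x + g x := by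
  obtain ⟨hf, C, hC⟩ := hf
  obtain ⟨hg, D, hD⟩ := hg
  exact ⟨hf.add hg, C + D, fun x => (abs_add_le _ _).trans (add_le_add (hC x) (hD x))⟩

@[fun_prop]
theorem mul (hf : BoundedMeasurable f) (hg : BoundedMeasurable g) :
    BoundedMeasurable fun x => f x * g x := by
  obtain ⟨hf, C, hC⟩ := hf
  obtain ⟨hg, D, hD⟩ := hg
  refine ⟨hf.mul hg, C * D, fun x => ?_⟩
  rw [abs_mul]
  exact mul_le_mul (hC x) (hD x) (abs_nonneg _) ((abs_nonneg _).trans (hC x))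

@[fun_prop]
theorem neg (hf : BoundedMeasurable f) : BoundedMeasurable fun x => -f x := by
  simpa using (const (-1)).mul hf

@[fun_prop]
theorem sub (hf : BoundedMeasurable f) (hg : BoundedMeasurable g) :
    BoundedMeasurable fun x => f x - g x := by
  simpa [sub_eq_add_neg] using hf.add hg.neg

@[fun_prop]
theorem pow (hf : BoundedMeasurable f) (n : ℕ) : BoundedMeasurable fun x => f x ^ n := by
  induction n with
  | zero => simpa using const 1
  | succ n ih => simpa [pow_succ] using ih.mul hf

end Algebra

@[fun_prop]
theorem comp_measurable {f : β → ℝ} (hf : BoundedMeasurable f) {g : α → β} (hg : Measurable g) :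
    BoundedMeasurable fun x => f (g x) :=
  ⟨hf.1.comp hg, hf.2.imp fun _ hC x => hC (g x)⟩

theorem integrable {μ : Measure α} [IsFiniteMeasure μ] {f : α → ℝ} (hf : BoundedMeasurable f) :
    Integrable f μ :=
  let ⟨C, hC⟩ := hf.2
  .of_bound hf.1.aestronglyMeasurable C (.of_forall hC)

@[fun_prop]
theorem integral {μ : Measure β} [IsProbabilityMeasure μ] {f : α → β → ℝ}
    (hf : BoundedMeasurable fun x : α × β => f x.1 x.2) :
    BoundedMeasurable fun x => ∫ z, f x z ∂μ := by
  obtain ⟨hf, C, hC⟩ := hf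
  refine ⟨hf.stronglyMeasurable.integral_prod_right.measurable, C, fun x => ?_⟩
  simpa using norm_integral_le_of_norm_le_const (μ := μ) (f := fun z => f x z) (C := C)
    (.of_forall fun z => hC (x, z))

variable {μ : Measure α} [IsProbabilityMeasure μ] {f g : α → ℝ}

theorem integral_add (hf : BoundedMeasurable f) (hg : BoundedMeasurable g) :
    ∫ x, f x + g x ∂μ = ∫ x, f x ∂μ + ∫ x, g x ∂μ :=
  MeasureTheory.integral_add hf.integrable hg.integrable

theorem integral_sub (hf : BoundedMeasurable f) (hg : BoundedMeasurable g) :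
    ∫ x, f x - g x ∂μ = ∫ x, f x ∂μ - ∫ x, g x ∂μ :=
  MeasureTheory.integral_sub hf.integrable hg.integrable

theorem integral_swap {ν : Measure β} [IsProbabilityMeasure ν] {f : α → β → ℝ}
    (hf : BoundedMeasurable fun x : α × β => f x.1 x.2) :
    ∫ x, ∫ y, f x y ∂ν ∂μ = ∫ y, ∫ x, f x y ∂μ ∂ν :=
  integral_integral_swap hf.integrable

end BoundedMeasurable

section BoundedKernels

variable {Ω : Type*} [MeasurableSpace Ω] {μ : Measure Ω} [IsProbabilityMeasure μ]
  {f g : Ω → Ω → ℝ} {a b : Ω → ℝ}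

theorem integral_mul_integral_of_antisymm (hf : BoundedMeasurable (Function.uncurry f))
    (hanti : ∀ p q, f p q = -f q p) (ha : BoundedMeasurable a) (hb : BoundedMeasurable b) :
    ∫ p, a p * ∫ z, f p z * b z ∂μ ∂μ = -∫ p, (∫ z, f p z * a z ∂μ) * b p ∂μ := by
  simp only [← integral_const_mul, ← integral_mul_const, ← integral_neg]
  rw [BoundedMeasurable.integral_swap (by fun_prop)]
  congr 1 with p
  congr 1 with z
  rw [hanti z p]
  ring

theorem integral_mul_integral_self_of_antisymm (hf : BoundedMeasurable (Function.uncurry f))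
    (hanti : ∀ p q, f p q = -f q p) (ha : BoundedMeasurable a) :
    ∫ p, a p * ∫ z, f p z * a z ∂μ ∂μ = 0 := by
  have h := integral_mul_integral_of_antisymm (μ := μ) hf hanti ha ha
  simp only [mul_comm (∫ z, f _ z * a z ∂μ)] at h
  linarith

theorem integral_integral_eq_zero_of_antisymm (hf : BoundedMeasurable (Function.uncurry f))
    (hanti : ∀ p q, f p q = -f q p) : ∫ p, ∫ q, f p q ∂μ ∂μ = 0 := by
  simpa using integral_mul_integral_self_of_antisymm (μ := μ) hf hanti (.const 1)

theorem integral_mul_mul_gram (hf : BoundedMeasurable (Function.uncurry f))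
    (hg : BoundedMeasurable (Function.uncurry g)) (ha : BoundedMeasurable a)
    (hb : BoundedMeasurable b) :
    ∫ p, ∫ q, a p * b q * ∫ z, f p z * g q z ∂μ ∂μ ∂μ =
      ∫ z, (∫ p, f p z * a p ∂μ) * ∫ q, g q z * b q ∂μ ∂μ := by
  calc
    _ = ∫ p, ∫ q, ∫ z, (f p z * a p) * (g q z * b q) ∂μ ∂μ ∂μ := by
      simp only [← integral_const_mul]
      congr! 6
      ring
    _ = ∫ p, ∫ z, ∫ q, (f p z * a p) * (g q z * b q) ∂μ ∂μ ∂μ := by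
      congr 1 with p
      exact BoundedMeasurable.integral_swap (by fun_prop)
    _ = ∫ z, ∫ p, ∫ q, (f p z * a p) * (g q z * b q) ∂μ ∂μ ∂μ :=
      BoundedMeasurable.integral_swap (by fun_prop)
    _ = _ := by simp only [integral_const_mul, integral_mul_const]

theorem integral_gram_mul_gram (hf : BoundedMeasurable (Function.uncurry f))
    (hg : BoundedMeasurable (Function.uncurry g)) :
    ∫ p, ∫ q, (∫ z, f p z * f q z ∂μ) * ∫ w, g p w * g q w ∂μ ∂μ ∂μ =
      ∫ z, ∫ w, (∫ p, f p z * g p w ∂μ) ^ 2 ∂μ ∂μ := by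
  calc
    _ = ∫ p, ∫ q, ∫ z, ∫ w, (f p z * g p w) * (f q z * g q w) ∂μ ∂μ ∂μ ∂μ := by
      simp only [← integral_mul_const]
      simp only [← integral_const_mul, mul_mul_mul_comm]
    _ = ∫ p, ∫ z, ∫ q, ∫ w, (f p z * g p w) * (f q z * g q w) ∂μ ∂μ ∂μ ∂μ := by
      congr 1 with p
      exact BoundedMeasurable.integral_swap (by fun_prop)
    _ = ∫ z, ∫ p, ∫ q, ∫ w, (f p z * g p w) * (f q z * g q w) ∂μ ∂μ ∂μ ∂μ :=
      BoundedMeasurable.integral_swap (by fun_prop)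
    _ = ∫ z, ∫ p, ∫ w, ∫ q, (f p z * g p w) * (f q z * g q w) ∂μ ∂μ ∂μ ∂μ := by
      congr 1 with z
      congr 1 with p
      exact BoundedMeasurable.integral_swap (by fun_prop)
    _ = ∫ z, ∫ w, ∫ p, ∫ q, (f p z * g p w) * (f q z * g q w) ∂μ ∂μ ∂μ ∂μ := by
      congr 1 with z
      exact BoundedMeasurable.integral_swap (by fun_prop)
    _ = _ := by simp only [integral_const_mul, integral_mul_const, sq]

theorem ae_ae_eq_zero_of_integral_integral_sq_eq_zero
    (hf : BoundedMeasurable (Function.uncurry f)) (h : ∫ p, ∫ q, f p q ^ 2 ∂μ ∂μ = 0) :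
    ∀ᵐ p ∂μ, ∀ᵐ q ∂μ, f p q = 0 := by
  have hint : BoundedMeasurable fun p => ∫ q, f p q ^ 2 ∂μ := by fun_prop
  have houter := (integral_eq_zero_iff_of_nonneg (fun p => by positivity) hint.integrable).mp h
  filter_upwards [houter] with p hp
  have hsq : BoundedMeasurable fun q => f p q ^ 2 := by fun_prop
  have hinner := (integral_eq_zero_iff_of_nonneg (fun q => sq_nonneg _) hsq.integrable).mp hp
  exact hinner.mono fun q hq => pow_eq_zero_iff two_ne_zero |>.mp hq

end BoundedKernels

/-- The sign kernel of a random linear order: `S p q` is `1` or `-1` according to whether `q` comes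
before or after `p`, and `0` for a tie. Only the algebraic consequences of transitivity and of the
absence of atoms are recorded. -/
structure OrderKernel {Ω : Type*} [MeasurableSpace Ω] (μ : Measure Ω) where
  toFun : Ω → Ω → ℝ
  boundedMeasurable_uncurry : BoundedMeasurable (Function.uncurry toFun)
  antisymm' : ∀ p q, toFun p q = -toFun q p
  -- For `p = q` this says that `toFun p z = ± 1` for almost every `z`.
  mul_eq' : ∀ p q, ∀ᵐ z ∂μ, toFun p z * toFun q z = 1 - toFun p q * (toFun p z - toFun q z)

namespace OrderKernel

variable {Ω α : Type*} [MeasurableSpace Ω] [MeasurableSpace α] {μ : Measure Ω}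

instance : CoeFun (OrderKernel μ) fun _ => Ω → Ω → ℝ := ⟨toFun⟩

section Basic

variable (S : OrderKernel μ)

@[fun_prop]
theorem boundedMeasurable {f g : α → Ω} (hf : Measurable f) (hg : Measurable g) :
    BoundedMeasurable fun x => S (f x) (g x) :=
  S.boundedMeasurable_uncurry.comp_measurable (hf.prodMk hg)

theorem antisymm (p q : Ω) : S p q = -S q p := S.antisymm' p q

theorem apply_self (p : Ω) : S p p = 0 := by linarith [S.antisymm p p]

theorem mul_eq (p q : Ω) : ∀ᵐ z ∂μ, S p z * S q z = 1 - S p q * (S p z - S q z) :=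
  S.mul_eq' p q

theorem ae_sq_eq_one (p : Ω) : ∀ᵐ z ∂μ, S p z ^ 2 = 1 := by
  filter_upwards [S.mul_eq p p] with z hz
  rw [sq, hz, S.apply_self, zero_mul, sub_zero]

/-- The score of a point: the probability that a random point comes before it minus the
probability that a random point comes after it. -/
def score (p : Ω) : ℝ := ∫ z, S p z ∂μ

theorem integral_apply (p : Ω) : ∫ z, S p z ∂μ = S.score p := rfl

/-- The double centering of the kernel `S`. -/
def centered (p q : Ω) : ℝ := S p q - S.score p + S.score q

theorem centered_antisymm (p q : Ω) : S.centered p q = -S.centered q p := by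
  rw [centered, centered, S.antisymm p q]
  ring

/-- The inner product of the rows `S p` and `S q`, in closed form; see
`integral_mul_self_eq_affinity`. -/
def affinity (p q : Ω) : ℝ := 1 - S p q * (S.score p - S.score q)

end Basic

variable [IsProbabilityMeasure μ] (S T : OrderKernel μ)

section Measurability

@[fun_prop]
theorem boundedMeasurable_score {f : α → Ω} (hf : Measurable f) :
    BoundedMeasurable fun x => S.score (f x) := by
  unfold score
  fun_prop

@[fun_prop]
theorem boundedMeasurable_centered {f g : α → Ω} (hf : Measurable f) (hg : Measurable g) :
    BoundedMeasurable fun x => S.centered (f x) (g x) := by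
  unfold centered
  fun_prop

@[fun_prop]
theorem boundedMeasurable_affinity {f g : α → Ω} (hf : Measurable f) (hg : Measurable g) :
    BoundedMeasurable fun x => S.affinity (f x) (g x) := by
  unfold affinity
  fun_prop

end Measurability

section IntegrationByParts

variable {g : Ω → ℝ}

/-- Integration by parts: in the coordinate `S.score`, the operator `g ↦ ∫ z, S · z * g z` is
an antiderivative. -/
theorem integral_mul_mul_integral (hg : BoundedMeasurable g) (w : Ω) :
    ∫ p, S w p * (g p * ∫ z, S p z * g z ∂μ) ∂μ =
      ((∫ z, S w z * g z ∂μ) ^ 2 - (∫ z, g z ∂μ) ^ 2) / 2 := by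
  have hpq : ∫ p, S w p * (g p * ∫ z, S p z * g z ∂μ) ∂μ =
      ∫ p, ∫ z, S w p * S p z * (g p * g z) ∂μ ∂μ := by
    simp only [← integral_const_mul]
    congr! 4
    ring
  have hqp : ∫ p, S w p * (g p * ∫ z, S p z * g z ∂μ) ∂μ =
      ∫ p, ∫ z, S w z * S z p * (g p * g z) ∂μ ∂μ := by
    rw [hpq, BoundedMeasurable.integral_swap (by fun_prop)]
    simp only [mul_comm (g _) (g _)]
  have hsum : ∫ p, ∫ z, S w p * S p z * (g p * g z) ∂μ ∂μ +
      ∫ p, ∫ z, S w z * S z p * (g p * g z) ∂μ ∂μ =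
      ∫ p, ∫ z, S w p * g p * (S w z * g z) - g p * g z ∂μ ∂μ := by
    rw [← BoundedMeasurable.integral_add (by fun_prop) (by fun_prop)]
    congr 1 with p
    rw [← BoundedMeasurable.integral_add (by fun_prop) (by fun_prop)]
    refine integral_congr_ae ?_
    filter_upwards [S.mul_eq w p] with z hz
    linear_combination -(g p * g z) * hz + (g p * g z * S w z) * S.antisymm z p
  simp (disch := fun_prop) only [BoundedMeasurable.integral_sub, integral_const_mul,
    integral_mul_const] at hsum
  linarith

theorem integral_score : ∫ p, S.score p ∂μ = 0 :=
  integral_integral_eq_zero_of_antisymm S.boundedMeasurable_uncurry S.antisymm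

theorem integral_mul_score (p : Ω) : ∫ z, S p z * S.score z ∂μ = (S.score p ^ 2 - 1) / 2 := by
  simpa [score] using S.integral_mul_mul_integral (.const 1) p

theorem integral_integral_mul (hg : BoundedMeasurable g) :
    ∫ p, ∫ z, S p z * g z ∂μ ∂μ = -∫ p, S.score p * g p ∂μ := by
  simpa [integral_apply] using integral_mul_integral_of_antisymm (μ := μ)
    S.boundedMeasurable_uncurry S.antisymm (.const 1) hg

theorem integral_score_sq : ∫ p, S.score p ^ 2 ∂μ = 1 / 3 := by
  have h := S.integral_integral_mul (S.boundedMeasurable_score measurable_id)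
  simp (disch := fun_prop) only [id, integral_mul_score, integral_div, ← sq,
    BoundedMeasurable.integral_sub, integral_const, probReal_univ, smul_eq_mul] at h
  linarith

theorem integral_centered (p : Ω) : ∫ z, S.centered p z ∂μ = 0 := by
  simp (disch := fun_prop) only [centered, BoundedMeasurable.integral_add,
    BoundedMeasurable.integral_sub, integral_score]
  simp [score]

theorem integral_centered_mul (hg : BoundedMeasurable g) (hg0 : ∫ z, g z ∂μ = 0) (p : Ω) :
    ∫ z, S.centered p z * g z ∂μ = ∫ z, S p z * g z ∂μ + ∫ z, S.score z * g z ∂μ := by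
  simp (disch := fun_prop) only [centered, add_mul, sub_mul, BoundedMeasurable.integral_add,
    BoundedMeasurable.integral_sub, integral_const_mul, hg0]
  ring

theorem integral_centered_mul_mul_integral (hg : BoundedMeasurable g) (hg0 : ∫ z, g z ∂μ = 0)
    (w : Ω) :
    ∫ p, S.centered w p * (g p * ∫ z, S.centered p z * g z ∂μ) ∂μ =
      ((∫ z, S.centered w z * g z ∂μ) ^ 2 -
        ∫ p, (∫ z, S.centered p z * g z ∂μ) ^ 2 ∂μ) / 2 := by
  have hskew : ∫ p, g p * ∫ z, S p z * g z ∂μ ∂μ = 0 :=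
    integral_mul_integral_self_of_antisymm S.boundedMeasurable_uncurry S.antisymm hg
  have hmean : ∫ p, ∫ z, S p z * g z ∂μ ∂μ = -∫ z, S.score z * g z ∂μ :=
    S.integral_integral_mul hg
  have hscore : ∫ p, S.score p * (g p * ∫ z, S p z * g z ∂μ) ∂μ =
      -(∫ p, (∫ z, S p z * g z ∂μ) ^ 2 ∂μ) / 2 := by
    have h := S.integral_integral_mul (g := fun p => g p * ∫ z, S p z * g z ∂μ) (by fun_prop)
    simp only [S.integral_mul_mul_integral hg, hg0, integral_div, zero_pow two_ne_zero,
      sub_zero] at h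
    linarith
  simp only [S.integral_centered_mul hg hg0]
  generalize hc : ∫ z, S.score z * g z ∂μ = c at *
  have hsq : ∫ p, (∫ z, S p z * g z ∂μ + c) ^ 2 ∂μ =
      ∫ p, (∫ z, S p z * g z ∂μ) ^ 2 ∂μ - c ^ 2 := by
    simp (disch := fun_prop) only [add_sq, BoundedMeasurable.integral_add, integral_const_mul,
      integral_mul_const, hmean, integral_const, probReal_univ, smul_eq_mul]
    ring
  have hexpand : ∀ p, S.centered w p * (g p * (∫ z, S p z * g z ∂μ + c)) =
      S w p * (g p * ∫ z, S p z * g z ∂μ) + c * (S w p * g p) -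
        S.score w * (g p * ∫ z, S p z * g z ∂μ) - S.score w * c * g p +
        S.score p * (g p * ∫ z, S p z * g z ∂μ) + c * (S.score p * g p) := by
    intro p
    rw [centered]
    ring
  simp only [hexpand, hsq]
  simp (disch := fun_prop) only [BoundedMeasurable.integral_add, BoundedMeasurable.integral_sub,
    integral_const_mul, S.integral_mul_mul_integral hg, hskew, hscore, hg0, hc]
  ring

end IntegrationByParts

section Gram

/-- The matrix of inner products of the centered rows of `S` with those of `T`. -/
def centeredGram (p q : Ω) : ℝ := ∫ z, S.centered p z * T.centered q z ∂μ

/-- The centered kernel of `S` applied to the score of `T`. -/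
def scoreResponse (p : Ω) : ℝ := ∫ z, S.centered p z * T.score z ∂μ

/-- The inner product of the two scores. -/
def scoreProduct : ℝ := ∫ z, S.score z * T.score z ∂μ

@[fun_prop]
theorem boundedMeasurable_centeredGram {f g : α → Ω} (hf : Measurable f) (hg : Measurable g) :
    BoundedMeasurable fun x => S.centeredGram T (f x) (g x) := by
  unfold centeredGram
  fun_prop

@[fun_prop]
theorem boundedMeasurable_scoreResponse {f : α → Ω} (hf : Measurable f) :
    BoundedMeasurable fun x => S.scoreResponse T (f x) := by
  unfold scoreResponse
  fun_prop

omit [IsProbabilityMeasure μ] in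
theorem integral_centered_mul_centered (p q : Ω) :
    ∫ z, S.centered p z * T.centered q z ∂μ = S.centeredGram T p q := rfl

omit [IsProbabilityMeasure μ] in
theorem integral_centered_mul_score (p : Ω) :
    ∫ z, S.centered p z * T.score z ∂μ = S.scoreResponse T p := rfl

omit [IsProbabilityMeasure μ] in
theorem integral_score_mul_score : ∫ z, S.score z * T.score z ∂μ = S.scoreProduct T := rfl

omit [IsProbabilityMeasure μ] in
theorem centeredGram_comm (p q : Ω) : S.centeredGram T p q = T.centeredGram S q p := by
  simp only [centeredGram, mul_comm]

omit [IsProbabilityMeasure μ] in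
theorem scoreProduct_comm : S.scoreProduct T = T.scoreProduct S := by
  simp only [scoreProduct, mul_comm]

theorem integral_centered_left (q : Ω) : ∫ p, S.centered p q ∂μ = 0 := by
  simp only [fun p => S.centered_antisymm p q, integral_neg, integral_centered, neg_zero]

theorem integral_centeredGram (p : Ω) : ∫ q, S.centeredGram T p q ∂μ = 0 := by
  simp only [centeredGram]
  rw [BoundedMeasurable.integral_swap (by fun_prop)]
  simp only [integral_const_mul, integral_centered_left, mul_zero, integral_zero]

theorem integral_integral_mul_centeredGram {a : Ω → ℝ} (ha : BoundedMeasurable a) :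
    ∫ p, ∫ q, a q * S.centeredGram T p q ∂μ ∂μ = 0 := by
  rw [BoundedMeasurable.integral_swap (by fun_prop)]
  simp only [integral_const_mul, S.centeredGram_comm T, integral_centeredGram, mul_zero,
    integral_zero]

omit [IsProbabilityMeasure μ] in
theorem integral_centered_mul_left {a : Ω → ℝ} (z : Ω) :
    ∫ p, S.centered p z * a p ∂μ = -∫ p, S.centered z p * a p ∂μ := by
  simp only [fun p => S.centered_antisymm p z, neg_mul, integral_neg]

theorem integral_centeredGram_sq_comm :
    ∫ p, ∫ q, T.centeredGram S p q ^ 2 ∂μ ∂μ = ∫ p, ∫ q, S.centeredGram T p q ^ 2 ∂μ ∂μ := by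
  rw [BoundedMeasurable.integral_swap (by fun_prop)]
  simp only [T.centeredGram_comm S]

theorem integral_scoreResponse : ∫ p, S.scoreResponse T p ∂μ = 0 := by
  simp only [scoreResponse]
  rw [BoundedMeasurable.integral_swap (by fun_prop)]
  simp only [integral_mul_const, integral_centered_left, zero_mul, integral_zero]

theorem integral_mul_eq_centeredGram (p q : Ω) :
    ∫ z, S p z * T q z ∂μ = S.centeredGram T p q - S.scoreResponse T p - T.scoreResponse S q +
      S.score p * T.score q + S.scoreProduct T := by
  have h : ∀ z, S p z * T q z = S.centered p z * T.centered q z - S.centered p z * T.score z -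
      T.centered q z * S.score z + T.score q * S.centered p z + S.score p * T.centered q z -
      S.score p * T.score z - T.score q * S.score z + S.score z * T.score z +
      S.score p * T.score q := by
    intro z
    rw [centered, centered]
    ring
  simp (disch := fun_prop) only [h, BoundedMeasurable.integral_add,
    BoundedMeasurable.integral_sub, integral_const_mul, integral_centered, integral_score,
    integral_const, probReal_univ, smul_eq_mul, integral_centered_mul_centered,
    integral_centered_mul_score, integral_score_mul_score]
  ring

theorem integral_mul_self_eq_affinity (p q : Ω) : ∫ z, S p z * S q z ∂μ = S.affinity p q := by
  rw [integral_congr_ae (S.mul_eq p q)]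
  simp (disch := fun_prop) only [BoundedMeasurable.integral_sub, integral_const_mul,
    integral_const, probReal_univ, smul_eq_mul, integral_apply, affinity]
  ring

theorem scoreResponse_self (p : Ω) : S.scoreResponse S p = S.score p ^ 2 / 2 - 1 / 6 := by
  rw [scoreResponse, S.integral_centered_mul (by fun_prop) S.integral_score, integral_mul_score]
  simp only [← sq, integral_score_sq]
  ring

omit [IsProbabilityMeasure μ] in
theorem centered_ae_eq (p : Ω) : ∀ᵐ q ∂μ, S.centered p q = S p q * S.affinity p q := by
  filter_upwards [S.ae_sq_eq_one p] with q hq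
  rw [centered, affinity]
  linear_combination (S.score p - S.score q) * hq

theorem affinity_sq_ae_eq (p : Ω) :
    ∀ᵐ q ∂μ, S.affinity p q ^ 2 = 2 * S.centeredGram S p q + 1 / 3 := by
  filter_upwards [S.ae_sq_eq_one p] with q hq
  have h := S.integral_mul_eq_centeredGram S p q
  have hm : S.scoreProduct S = 1 / 3 := by simp only [scoreProduct, ← sq, integral_score_sq]
  rw [integral_mul_self_eq_affinity, scoreResponse_self, scoreResponse_self, hm] at h
  rw [affinity] at h ⊢
  linear_combination (S.score p - S.score q) ^ 2 * hq + 2 * h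

omit [IsProbabilityMeasure μ] in
theorem mul_ae_eq_affinity (p q : Ω) : ∀ᵐ z ∂μ,
    S p z * S q z = S.affinity p q - S p q * (S.centered p z - S.centered q z) := by
  filter_upwards [S.mul_eq p q] with z hz
  rw [hz, affinity, centered, centered]
  ring

end Gram

section FourthMoments

theorem integral_affinity_sq_mul_affinity_sq :
    ∫ p, ∫ q, S.affinity p q ^ 2 * T.affinity p q ^ 2 ∂μ ∂μ =
      1 / 9 + 4 * ∫ p, ∫ q, S.centeredGram T p q ^ 2 ∂μ ∂μ := by
  have hgram : ∫ p, ∫ q, S.centeredGram S p q * T.centeredGram T p q ∂μ ∂μ =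
      ∫ p, ∫ q, S.centeredGram T p q ^ 2 ∂μ ∂μ := by
    refine (integral_gram_mul_gram (f := S.centered) (g := T.centered) (by fun_prop)
      (by fun_prop)).trans ?_
    congr! 5 with p q
    simp only [fun z => S.centered_antisymm z p, fun z => T.centered_antisymm z q, neg_mul_neg,
      centeredGram]
  have hexpand : ∀ p, ∫ q, S.affinity p q ^ 2 * T.affinity p q ^ 2 ∂μ =
      ∫ q, (4 * (S.centeredGram S p q * T.centeredGram T p q) + 2 / 3 * S.centeredGram S p q +
        2 / 3 * T.centeredGram T p q + 1 / 9) ∂μ := by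
    intro p
    refine integral_congr_ae ?_
    filter_upwards [S.affinity_sq_ae_eq p, T.affinity_sq_ae_eq p] with q hS hT
    rw [hS, hT]
    ring
  simp (disch := fun_prop) only [hexpand, BoundedMeasurable.integral_add, integral_const_mul,
    integral_centeredGram, hgram, integral_const, probReal_univ, smul_eq_mul]
  ring

theorem integral_centered_mul_centered_mul_centeredGram :
    ∫ p, ∫ q, S.centered p q * T.centered p q * T.centeredGram S p q ∂μ ∂μ =
      (∫ p, S.centeredGram T p p ^ 2 ∂μ - ∫ p, ∫ q, S.centeredGram T p q ^ 2 ∂μ ∂μ) / 2 := by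
  have hq : ∀ p, ∫ q, S.centered p q * T.centered p q * T.centeredGram S p q ∂μ =
      (S.centeredGram T p p ^ 2 - ∫ q, S.centeredGram T q p ^ 2 ∂μ) / 2 := by
    intro p
    simpa only [centeredGram, mul_comm (T.centered p _), mul_assoc] using
      S.integral_centered_mul_mul_integral (g := T.centered p) (by fun_prop)
        (T.integral_centered p) p
  simp (disch := fun_prop) only [hq, integral_div, BoundedMeasurable.integral_sub]
  rw [BoundedMeasurable.integral_swap (by fun_prop)]

/-- The inner product of the differences of the rows of `p` and `q` in the two centered kernels. -/
def differenceGram (p q : Ω) : ℝ :=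
  ∫ z, (S.centered p z - S.centered q z) * (T.centered p z - T.centered q z) ∂μ

@[fun_prop]
theorem boundedMeasurable_differenceGram {f g : α → Ω} (hf : Measurable f) (hg : Measurable g) :
    BoundedMeasurable fun x => S.differenceGram T (f x) (g x) := by
  unfold differenceGram
  fun_prop

theorem differenceGram_eq (p q : Ω) : S.differenceGram T p q =
    S.centeredGram T p p + S.centeredGram T q q - S.centeredGram T p q -
      T.centeredGram S p q := by
  simp (disch := fun_prop) only [differenceGram, sub_mul, mul_sub, T.centeredGram_comm S p q,
    BoundedMeasurable.integral_sub, integral_centered_mul_centered]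
  ring

theorem integral_centered_mul_centered_mul_differenceGram :
    ∫ p, ∫ q, S.centered p q * T.centered p q * S.differenceGram T p q ∂μ ∂μ =
      ∫ p, S.centeredGram T p p ^ 2 ∂μ + ∫ p, ∫ q, S.centeredGram T p q ^ 2 ∂μ ∂μ := by
  have hdiag : ∫ p, ∫ q, S.centered p q * T.centered p q * S.centeredGram T p p ∂μ ∂μ =
      ∫ p, S.centeredGram T p p ^ 2 ∂μ := by
    simp only [integral_mul_const, integral_centered_mul_centered, sq]
  have hdiag' : ∫ p, ∫ q, S.centered p q * T.centered p q * S.centeredGram T q q ∂μ ∂μ =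
      ∫ p, S.centeredGram T p p ^ 2 ∂μ := by
    rw [BoundedMeasurable.integral_swap (by fun_prop), ← hdiag]
    congr! 4 with p q
    rw [S.centered_antisymm, T.centered_antisymm, neg_mul_neg]
  have hoff := S.integral_centered_mul_centered_mul_centeredGram T
  have hoff' := T.integral_centered_mul_centered_mul_centeredGram S
  simp only [mul_comm (T.centered _ _), fun p => T.centeredGram_comm S p p,
    S.integral_centeredGram_sq_comm T] at hoff'
  simp (disch := fun_prop) only [differenceGram_eq, mul_add, mul_sub, hdiag, hdiag',
    BoundedMeasurable.integral_add, BoundedMeasurable.integral_sub, hoff, hoff']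
  ring

theorem integral_differenceGram_sq :
    ∫ p, ∫ q, S.differenceGram T p q ^ 2 ∂μ ∂μ =
      2 * ∫ p, S.centeredGram T p p ^ 2 ∂μ + 2 * (∫ p, S.centeredGram T p p ∂μ) ^ 2 +
        2 * ∫ p, ∫ q, S.centeredGram T p q ^ 2 ∂μ ∂μ +
        2 * ∫ p, ∫ q, S.centeredGram T p q * T.centeredGram S p q ∂μ ∂μ := by
  have hexpand : ∀ p q, S.differenceGram T p q ^ 2 =
      S.centeredGram T p p ^ 2 + S.centeredGram T q q ^ 2 +
      2 * (S.centeredGram T p p * S.centeredGram T q q) + S.centeredGram T p q ^ 2 +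
      T.centeredGram S p q ^ 2 + 2 * (S.centeredGram T p q * T.centeredGram S p q) -
      2 * S.centeredGram T p p * S.centeredGram T p q -
      2 * S.centeredGram T p p * T.centeredGram S p q -
      2 * (S.centeredGram T q q * S.centeredGram T p q) -
      2 * (S.centeredGram T q q * T.centeredGram S p q) := by
    intro p q
    rw [differenceGram_eq]
    ring
  have hdiag := S.integral_integral_mul_centeredGram T (a := fun q => S.centeredGram T q q)
    (by fun_prop)
  have hdiag' := T.integral_integral_mul_centeredGram S (a := fun q => S.centeredGram T q q)
    (by fun_prop)
  simp (disch := fun_prop) only [hexpand, BoundedMeasurable.integral_add,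
    BoundedMeasurable.integral_sub, integral_const_mul, integral_mul_const, integral_const,
    probReal_univ, smul_eq_mul, integral_centeredGram,
    S.integral_centeredGram_sq_comm T, hdiag, hdiag']
  ring

omit [IsProbabilityMeasure μ] in
theorem affinity_comm (p q : Ω) : S.affinity p q = S.affinity q p := by
  rw [affinity, affinity, S.antisymm p q]
  ring

theorem integral_mul_mul_mul (p q : Ω) :
    ∫ z, (S p z * T p z) * (S q z * T q z) ∂μ =
      S.affinity p q * T.affinity p q + S p q * T p q * S.differenceGram T p q := by
  have h : ∀ᵐ z ∂μ, (S p z * T p z) * (S q z * T q z) =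
      S.affinity p q * T.affinity p q -
      S.affinity p q * T p q * (T.centered p z - T.centered q z) -
      T.affinity p q * S p q * (S.centered p z - S.centered q z) +
      S p q * T p q *
        ((S.centered p z - S.centered q z) * (T.centered p z - T.centered q z)) := by
    filter_upwards [S.mul_ae_eq_affinity p q, T.mul_ae_eq_affinity p q] with z hS hT
    rw [mul_mul_mul_comm, hS, hT]
    ring
  rw [integral_congr_ae h]
  simp (disch := fun_prop) only [BoundedMeasurable.integral_add, BoundedMeasurable.integral_sub,
    integral_const_mul, integral_centered, integral_const, probReal_univ, smul_eq_mul,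
    differenceGram]
  ring

theorem integral_integral_mul_mul_mul_sq :
    ∫ p, ∫ q, (∫ z, (S p z * T p z) * (S q z * T q z) ∂μ) ^ 2 ∂μ ∂μ =
      1 / 9 + 8 * ∫ p, ∫ q, S.centeredGram T p q ^ 2 ∂μ ∂μ +
        4 * ∫ p, S.centeredGram T p p ^ 2 ∂μ + 2 * (∫ p, S.centeredGram T p p ∂μ) ^ 2 +
        2 * ∫ p, ∫ q, S.centeredGram T p q * T.centeredGram S p q ∂μ ∂μ := by
  have hexpand : ∀ p, ∫ q, (∫ z, (S p z * T p z) * (S q z * T q z) ∂μ) ^ 2 ∂μ =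
      ∫ q, (S.affinity p q ^ 2 * T.affinity p q ^ 2 +
        2 * (S.centered p q * T.centered p q * S.differenceGram T p q) +
        S.differenceGram T p q ^ 2) ∂μ := by
    intro p
    refine integral_congr_ae ?_
    filter_upwards [S.centered_ae_eq p, T.centered_ae_eq p, S.ae_sq_eq_one p,
      T.ae_sq_eq_one p] with q hS hT hS1 hT1
    rw [integral_mul_mul_mul, hS, hT]
    linear_combination S.differenceGram T p q ^ 2 * (T p q ^ 2 * hS1 + hT1)
  simp (disch := fun_prop) only [hexpand, BoundedMeasurable.integral_add, integral_const_mul,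
    integral_affinity_sq_mul_affinity_sq, integral_centered_mul_centered_mul_differenceGram,
    integral_differenceGram_sq]
  ring

end FourthMoments

section SecondMoments

theorem integral_integral_mul_self :
    ∫ p, ∫ z, S p z * T p z ∂μ ∂μ = ∫ p, S.centeredGram T p p ∂μ + 2 * S.scoreProduct T := by
  simp (disch := fun_prop) only [integral_mul_eq_centeredGram, BoundedMeasurable.integral_add,
    BoundedMeasurable.integral_sub, integral_scoreResponse, integral_score_mul_score,
    integral_const, probReal_univ, smul_eq_mul]
  ring

theorem integral_integral_score_mul_score_mul_centeredGram :
    ∫ p, ∫ q, T.score p * S.score q * S.centeredGram T p q ∂μ ∂μ =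
      ∫ z, S.scoreResponse T z * T.scoreResponse S z ∂μ := by
  have h := integral_mul_mul_gram (μ := μ) (f := S.centered) (g := T.centered) (a := T.score)
    (b := S.score) (by fun_prop) (by fun_prop) (by fun_prop) (by fun_prop)
  simpa only [integral_centered_mul_centered, integral_centered_mul_left,
    integral_centered_mul_score, neg_mul_neg] using h

theorem integral_gram_mul_gram_comm :
    ∫ p, ∫ q, (∫ z, S p z * T q z ∂μ) * ∫ z, S q z * T p z ∂μ ∂μ ∂μ =
      ∫ p, ∫ q, S.centeredGram T p q * T.centeredGram S p q ∂μ ∂μ +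
        4 * ∫ p, S.scoreResponse T p * T.scoreResponse S p ∂μ + 2 * S.scoreProduct T ^ 2 := by
  have hX := S.integral_integral_score_mul_score_mul_centeredGram T
  have hX' := T.integral_integral_score_mul_score_mul_centeredGram S
  have hρ := S.integral_integral_mul_centeredGram T (a := S.scoreResponse T) (by fun_prop)
  have hρ' := T.integral_integral_mul_centeredGram S (a := T.scoreResponse S) (by fun_prop)
  simp only [mul_comm (T.scoreResponse S _)] at hX'
  have hexpand : ∀ p q, (∫ z, S p z * T q z ∂μ) * ∫ z, S q z * T p z ∂μ =
      S.centeredGram T p q * T.centeredGram S p q +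
      T.score p * S.score q * S.centeredGram T p q +
      S.score p * T.score q * T.centeredGram S p q +
      S.scoreResponse T p * T.scoreResponse S p + S.scoreResponse T q * T.scoreResponse S q +
      S.score p * T.score p * (S.score q * T.score q) + S.scoreProduct T ^ 2 +
      ((S.scoreProduct T - T.scoreResponse S p) * S.centeredGram T p q +
        (S.scoreProduct T - S.scoreResponse T p) * T.centeredGram S p q -
        S.scoreResponse T q * S.centeredGram T p q - T.scoreResponse S q * T.centeredGram S p q) +
      ((S.scoreResponse T p - S.scoreProduct T) * S.scoreResponse T q +
        (T.scoreResponse S p - S.scoreProduct T) * T.scoreResponse S q +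
        (S.scoreProduct T - S.scoreResponse T p) * T.score p * S.score q +
        (S.scoreProduct T - T.scoreResponse S p) * S.score p * T.score q -
        S.scoreProduct T * (S.scoreResponse T p + T.scoreResponse S p) -
        T.score p * (S.score q * T.scoreResponse S q) -
        S.score p * (T.score q * S.scoreResponse T q)) := by
    intro p q
    simp only [integral_mul_eq_centeredGram, S.centeredGram_comm T q p]
    ring
  simp (disch := fun_prop) only [hexpand, BoundedMeasurable.integral_add,
    BoundedMeasurable.integral_sub, integral_const_mul, integral_mul_const, integral_const,
    probReal_univ, smul_eq_mul, one_mul, integral_centeredGram, hX, hX', hρ, hρ',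
    integral_score, integral_scoreResponse, integral_score_mul_score]
  ring

end SecondMoments

section ThirdMoments

/-- The kernel `S` applied to the difference of the rows of `p` and `q` in the centered kernel of
`T`. -/
def differenceResponse (p q : Ω) : ℝ := ∫ z, S p z * (T.centered p z - T.centered q z) ∂μ

@[fun_prop]
theorem boundedMeasurable_differenceResponse {f g : α → Ω} (hf : Measurable f)
    (hg : Measurable g) : BoundedMeasurable fun x => S.differenceResponse T (f x) (g x) := by
  unfold differenceResponse
  fun_prop

theorem differenceResponse_eq (p q : Ω) : S.differenceResponse T p q =
    S.centeredGram T p p - S.centeredGram T p q - T.scoreResponse S p + T.scoreResponse S q := by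
  have h : ∀ z, S p z * (T.centered p z - T.centered q z) =
      S.centered p z * T.centered p z - S.centered p z * T.centered q z -
      T.centered p z * S.score z + T.centered q z * S.score z +
      S.score p * (T.centered p z - T.centered q z) := by
    intro z
    have hz : S p z = S.centered p z + S.score p - S.score z := by
      rw [centered]
      ring
    rw [hz]
    ring
  simp (disch := fun_prop) only [differenceResponse, h, BoundedMeasurable.integral_add,
    BoundedMeasurable.integral_sub, integral_const_mul, integral_centered,
    integral_centered_mul_centered, integral_centered_mul_score]
  ring

theorem integral_mul_mul (p q : Ω) : ∫ z, S p z * (T p z * T q z) ∂μ =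
    S.score p * T.affinity p q - T p q * S.differenceResponse T p q := by
  have h : ∀ᵐ z ∂μ, S p z * (T p z * T q z) = T.affinity p q * S p z -
      T p q * (S p z * (T.centered p z - T.centered q z)) := by
    filter_upwards [T.mul_ae_eq_affinity p q] with z hz
    rw [hz]
    ring
  rw [integral_congr_ae h]
  simp (disch := fun_prop) only [BoundedMeasurable.integral_sub, integral_const_mul,
    integral_apply, differenceResponse]
  ring

theorem integral_score_mul_score_mul_affinity_sq :
    ∫ p, ∫ q, S.score p * S.score q * T.affinity p q ^ 2 ∂μ ∂μ =
      2 * ∫ p, T.scoreResponse S p ^ 2 ∂μ := by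
  have hgram := integral_mul_mul_gram (μ := μ) (f := T.centered) (g := T.centered)
    (a := S.score) (b := S.score) (by fun_prop) (by fun_prop) (by fun_prop) (by fun_prop)
  simp only [integral_centered_mul_centered, integral_centered_mul_left,
    integral_centered_mul_score, ← sq, neg_sq] at hgram
  have hexpand : ∀ p, ∫ q, S.score p * S.score q * T.affinity p q ^ 2 ∂μ =
      ∫ q, (2 * (S.score p * S.score q * T.centeredGram T p q) +
        1 / 3 * S.score p * S.score q) ∂μ := by
    intro p
    refine integral_congr_ae ?_
    filter_upwards [T.affinity_sq_ae_eq p] with q hq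
    rw [hq]
    ring
  simp (disch := fun_prop) only [hexpand, BoundedMeasurable.integral_add, integral_const_mul,
    hgram, integral_score, mul_zero, add_zero]

theorem integral_centered_mul_score_mul_differenceResponse :
    ∫ p, ∫ q, T.centered p q * (S.score p * S.differenceResponse T q p) ∂μ ∂μ =
      ∫ p, T.scoreResponse S p ^ 2 ∂μ -
        ∫ p, S.centeredGram T p p * T.scoreResponse S p ∂μ := by
  have hskew : ∀ p, ∫ q, T.centered p q * S.centeredGram T q p ∂μ = 0 := fun p =>
    integral_mul_integral_self_of_antisymm (f := S.centered) (by fun_prop) S.centered_antisymm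
      (by fun_prop)
  have hleft : ∀ a : Ω → ℝ, BoundedMeasurable a →
      ∫ p, ∫ q, T.centered p q * S.score p * a q ∂μ ∂μ =
        -∫ q, a q * T.scoreResponse S q ∂μ := by
    intro a ha
    rw [BoundedMeasurable.integral_swap (by fun_prop)]
    simp only [integral_mul_const, integral_centered_mul_left, integral_centered_mul_score,
      neg_mul, integral_neg, mul_comm (a _)]
  have hk := hleft (fun q => S.centeredGram T q q) (by fun_prop)
  have hρ := hleft (T.scoreResponse S) (by fun_prop)
  have hexpand : ∀ p q, T.centered p q * (S.score p * S.differenceResponse T q p) =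
      T.centered p q * S.score p * S.centeredGram T q q -
      S.score p * (T.centered p q * S.centeredGram T q p) -
      T.centered p q * S.score p * T.scoreResponse S q +
      S.score p * T.scoreResponse S p * T.centered p q := by
    intro p q
    rw [differenceResponse_eq]
    ring
  simp (disch := fun_prop) only [hexpand, BoundedMeasurable.integral_add,
    BoundedMeasurable.integral_sub, integral_const_mul, hskew, hk, hρ, integral_centered,
    mul_zero, integral_zero, ← sq]
  ring

theorem integral_differenceResponse_mul_comm :
    ∫ p, ∫ q, S.differenceResponse T p q * S.differenceResponse T q p ∂μ ∂μ =
      (∫ p, S.centeredGram T p p ∂μ) ^ 2 +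
        2 * ∫ p, S.centeredGram T p p * T.scoreResponse S p ∂μ +
        ∫ p, ∫ q, S.centeredGram T p q * T.centeredGram S p q ∂μ ∂μ -
        2 * ∫ p, T.scoreResponse S p ^ 2 ∂μ := by
  have hk := S.integral_integral_mul_centeredGram T (a := fun q => S.centeredGram T q q)
    (by fun_prop)
  have hρ := S.integral_integral_mul_centeredGram T (a := T.scoreResponse S) (by fun_prop)
  have hρ' := T.integral_integral_mul_centeredGram S (a := T.scoreResponse S) (by fun_prop)
  have hexpand : ∀ p q, S.differenceResponse T p q * S.differenceResponse T q p =
      S.centeredGram T p p * S.centeredGram T q q +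
      S.centeredGram T p p * T.scoreResponse S p + S.centeredGram T q q * T.scoreResponse S q +
      S.centeredGram T p q * T.centeredGram S p q -
      T.scoreResponse S p ^ 2 - T.scoreResponse S q ^ 2 +
      ((T.scoreResponse S p - S.centeredGram T p p) * T.centeredGram S p q -
        T.scoreResponse S p * S.centeredGram T p q +
        T.scoreResponse S q * S.centeredGram T p q -
        S.centeredGram T q q * S.centeredGram T p q -
        T.scoreResponse S q * T.centeredGram S p q) +
      ((2 * T.scoreResponse S p - S.centeredGram T p p) * T.scoreResponse S q -
        T.scoreResponse S p * S.centeredGram T q q) := by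
    intro p q
    rw [differenceResponse_eq, differenceResponse_eq, S.centeredGram_comm T q p]
    ring
  simp (disch := fun_prop) only [hexpand, BoundedMeasurable.integral_add,
    BoundedMeasurable.integral_sub, integral_const_mul, integral_mul_const, integral_const,
    probReal_univ, smul_eq_mul, one_mul, integral_centeredGram, hk, hρ, hρ',
    integral_scoreResponse]
  ring

theorem integral_mul_mul_mul_comm :
    ∫ p, ∫ q, (∫ z, S p z * (T p z * T q z) ∂μ) * ∫ z, S q z * (T q z * T p z) ∂μ ∂μ ∂μ =
      6 * ∫ p, T.scoreResponse S p ^ 2 ∂μ -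
        4 * ∫ p, S.centeredGram T p p * T.scoreResponse S p ∂μ -
        (∫ p, S.centeredGram T p p ∂μ) ^ 2 -
        ∫ p, ∫ q, S.centeredGram T p q * T.centeredGram S p q ∂μ ∂μ := by
  have hcross := S.integral_centered_mul_score_mul_differenceResponse T
  have hcross' : ∫ p, ∫ q, T.centered p q * (S.score q * S.differenceResponse T p q) ∂μ ∂μ =
      -∫ p, ∫ q, T.centered p q * (S.score p * S.differenceResponse T q p) ∂μ ∂μ := by
    rw [BoundedMeasurable.integral_swap (by fun_prop)]
    simp only [← integral_neg]
    congr! 4 with p q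
    rw [T.centered_antisymm, neg_mul]
  have hexpand : ∀ p, ∫ q, (∫ z, S p z * (T p z * T q z) ∂μ) *
        ∫ z, S q z * (T q z * T p z) ∂μ ∂μ =
      ∫ q, (S.score p * S.score q * T.affinity p q ^ 2 +
        T.centered p q * (S.score p * S.differenceResponse T q p) -
        T.centered p q * (S.score q * S.differenceResponse T p q) -
        S.differenceResponse T p q * S.differenceResponse T q p) ∂μ := by
    intro p
    refine integral_congr_ae ?_
    filter_upwards [T.centered_ae_eq p, T.ae_sq_eq_one p] with q hT hT1
    rw [integral_mul_mul, integral_mul_mul, T.affinity_comm q p, T.antisymm q p, hT]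
    linear_combination -(S.differenceResponse T p q * S.differenceResponse T q p) * hT1
  simp (disch := fun_prop) only [hexpand, BoundedMeasurable.integral_add,
    BoundedMeasurable.integral_sub, integral_score_mul_score_mul_affinity_sq, hcross', hcross,
    integral_differenceResponse_mul_comm]
  ring

end ThirdMoments

section Discrepancy

/-- The squared deviation of `S` and `T` from independence. It vanishes exactly when all rows of
`S` are uncorrelated with all rows of `T`, see `discrepancy_eq_zero_iff`. -/
def discrepancy : ℝ :=
  2 * ∫ p, ∫ q, S.centeredGram T p q ^ 2 ∂μ ∂μ +
    1 / 2 * ∫ p, ∫ q, (S.centeredGram T p q + T.centeredGram S p q) ^ 2 ∂μ ∂μ +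
    ∫ p, S.centeredGram T p p ^ 2 ∂μ +
    ∫ p, (S.scoreResponse T p + T.scoreResponse S p) ^ 2 ∂μ +
    1 / 2 * ∫ p, (S.centeredGram T p p -
      (S.scoreResponse T p + T.scoreResponse S p) - S.scoreProduct T) ^ 2 ∂μ

omit [IsProbabilityMeasure μ] in
theorem discrepancy_nonneg : 0 ≤ S.discrepancy T := by
  unfold discrepancy
  positivity

theorem discrepancy_eq : S.discrepancy T =
    3 * ∫ p, ∫ q, S.centeredGram T p q ^ 2 ∂μ ∂μ +
      ∫ p, ∫ q, S.centeredGram T p q * T.centeredGram S p q ∂μ ∂μ +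
      3 / 2 * ∫ p, S.centeredGram T p p ^ 2 ∂μ +
      3 / 2 * (∫ p, S.scoreResponse T p ^ 2 ∂μ +
        2 * ∫ p, S.scoreResponse T p * T.scoreResponse S p ∂μ +
        ∫ p, T.scoreResponse S p ^ 2 ∂μ) -
      ∫ p, S.centeredGram T p p * S.scoreResponse T p ∂μ -
      ∫ p, S.centeredGram T p p * T.scoreResponse S p ∂μ -
      S.scoreProduct T * ∫ p, S.centeredGram T p p ∂μ + 1 / 2 * S.scoreProduct T ^ 2 := by
  have hoff : ∀ p q, (S.centeredGram T p q + T.centeredGram S p q) ^ 2 =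
      S.centeredGram T p q ^ 2 + 2 * (S.centeredGram T p q * T.centeredGram S p q) +
        T.centeredGram S p q ^ 2 := by
    intro p q
    ring
  have hresponse : ∀ p, (S.scoreResponse T p + T.scoreResponse S p) ^ 2 =
      S.scoreResponse T p ^ 2 + 2 * (S.scoreResponse T p * T.scoreResponse S p) +
        T.scoreResponse S p ^ 2 := by
    intro p
    ring
  have hdiag : ∀ p, (S.centeredGram T p p -
        (S.scoreResponse T p + T.scoreResponse S p) - S.scoreProduct T) ^ 2 =
      S.centeredGram T p p ^ 2 + S.scoreResponse T p ^ 2 +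
        2 * (S.scoreResponse T p * T.scoreResponse S p) + T.scoreResponse S p ^ 2 -
        2 * (S.centeredGram T p p * S.scoreResponse T p) -
        2 * (S.centeredGram T p p * T.scoreResponse S p) -
        2 * S.scoreProduct T * S.centeredGram T p p + S.scoreProduct T ^ 2 +
        2 * S.scoreProduct T * S.scoreResponse T p +
        2 * S.scoreProduct T * T.scoreResponse S p := by
    intro p
    ring
  simp (disch := fun_prop) only [discrepancy, hoff, hresponse, hdiag,
    BoundedMeasurable.integral_add, BoundedMeasurable.integral_sub, integral_const_mul,
    integral_const, probReal_univ, smul_eq_mul, one_mul,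
    S.integral_centeredGram_sq_comm T, integral_scoreResponse]
  ring

theorem eight_mul_discrepancy : 8 * S.discrepancy T =
    3 * (∫ p, ∫ q, (∫ z, (S p z * T p z) * (S q z * T q z) ∂μ) ^ 2 ∂μ ∂μ - 1 / 9) -
      2 * (∫ p, ∫ z, S p z * T p z ∂μ ∂μ) ^ 2 +
      6 * ∫ p, ∫ q, (∫ z, S p z * T q z ∂μ) * ∫ z, S q z * T p z ∂μ ∂μ ∂μ +
      2 * (∫ p, ∫ q, (∫ z, S p z * (T p z * T q z) ∂μ) *
          ∫ z, S q z * (T q z * T p z) ∂μ ∂μ ∂μ +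
        ∫ p, ∫ q, (∫ z, T p z * (S p z * S q z) ∂μ) *
          ∫ z, T q z * (S q z * S p z) ∂μ ∂μ ∂μ) := by
  rw [discrepancy_eq, integral_integral_mul_mul_mul_sq, integral_integral_mul_self,
    integral_gram_mul_gram_comm, S.integral_mul_mul_mul_comm T, T.integral_mul_mul_mul_comm S]
  simp only [fun p => T.centeredGram_comm S p p,
    fun p q => mul_comm (T.centeredGram S p q) (S.centeredGram T p q)]
  ring

end Discrepancy

section Equality

open ProbabilityTheory

theorem integral_mul_eq_zero_of_ae_eq_const {g : Ω → ℝ} (hg : BoundedMeasurable g)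
    (hg0 : ∫ z, g z ∂μ = 0) {c : ℝ} (hc : ∀ᵐ p ∂μ, ∫ z, S p z * g z ∂μ = c) (w : Ω) :
    ∫ z, S w z * g z ∂μ = 0 := by
  have hibp : ∀ w, (∫ z, S w z * g z ∂μ) * c = (∫ z, S w z * g z ∂μ) ^ 2 / 2 := by
    intro w
    have h := S.integral_mul_mul_integral hg w
    rw [hg0, integral_congr_ae (g := fun p => S w p * g p * c)
      (hc.mono fun p hp => by simp only [hp, mul_assoc]), integral_mul_const] at h
    linarith
  obtain ⟨p, hp⟩ := hc.exists
  have hc0 : c ^ 2 = 0 := by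
    have h := hibp p
    rw [hp] at h
    linarith
  have hw := hibp w
  rw [pow_eq_zero_iff two_ne_zero |>.mp hc0] at hw
  exact pow_eq_zero_iff two_ne_zero |>.mp (by linarith)

theorem covariance_apply (p q : Ω) :
    cov[S p, T q; μ] = ∫ z, S p z * T q z ∂μ - S.score p * T.score q := by
  have hmem : ∀ (S : OrderKernel μ) (p : Ω), MemLp (S p) 2 μ := fun S p =>
    let ⟨hS, C, hC⟩ := S.boundedMeasurable (f := fun _ => p) measurable_const measurable_id
    .of_bound hS.aestronglyMeasurable C (.of_forall hC)
  exact covariance_eq_sub (hmem S p) (hmem T q)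

theorem covariance_apply_eq (p q : Ω) : cov[S p, T q; μ] =
    ∫ z, S p z * T.centered q z ∂μ - ∫ z, S p z * T.score z ∂μ := by
  have h : ∀ z, S p z * T.centered q z =
      S p z * T q z - T.score q * S p z + S p z * T.score z := by
    intro z
    rw [centered]
    ring
  simp (disch := fun_prop) only [covariance_apply, h, BoundedMeasurable.integral_add,
    BoundedMeasurable.integral_sub, integral_const_mul, integral_apply]
  ring

omit [IsProbabilityMeasure μ] in
theorem covariance_apply_comm (p q : Ω) : cov[S p, T q; μ] = cov[T q, S p; μ] :=
  covariance_comm _ _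

section Uncorrelated

variable {S T}

theorem integral_mul_score_eq_zero_of_covariance_eq_zero (h : ∀ p q, cov[S p, T q; μ] = 0)
    (p : Ω) : ∫ z, S p z * T.score z ∂μ = 0 := by
  have hgram : ∀ q, ∫ z, S p z * T z q ∂μ = -(S.score p * T.score q) := by
    intro q
    have hq := h p q
    rw [covariance_apply] at hq
    simp only [fun z => T.antisymm z q, mul_neg, integral_neg]
    linarith
  simp only [score, ← integral_const_mul]
  rw [BoundedMeasurable.integral_swap (by fun_prop)]
  simp only [hgram, integral_neg, integral_const_mul, integral_score, mul_zero, neg_zero]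

theorem scoreProduct_eq_zero_of_covariance_eq_zero (h : ∀ p q, cov[S p, T q; μ] = 0) :
    S.scoreProduct T = 0 := by
  have hmean := S.integral_integral_mul (g := T.score) (by fun_prop)
  simp only [integral_mul_score_eq_zero_of_covariance_eq_zero h, integral_zero] at hmean
  rw [scoreProduct]
  linarith

theorem scoreResponse_eq_zero_of_covariance_eq_zero (h : ∀ p q, cov[S p, T q; μ] = 0) (p : Ω) :
    S.scoreResponse T p = 0 := by
  rw [scoreResponse, S.integral_centered_mul (by fun_prop) T.integral_score,
    integral_mul_score_eq_zero_of_covariance_eq_zero h, integral_score_mul_score,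
    scoreProduct_eq_zero_of_covariance_eq_zero h, add_zero]

theorem discrepancy_eq_zero_of_covariance_eq_zero (h : ∀ p q, cov[S p, T q; μ] = 0) :
    S.discrepancy T = 0 := by
  have h' : ∀ p q, cov[T p, S q; μ] = 0 := fun p q => by rw [covariance_apply_comm, h]
  have hm := scoreProduct_eq_zero_of_covariance_eq_zero h
  have hρ := scoreResponse_eq_zero_of_covariance_eq_zero h
  have hρ' := scoreResponse_eq_zero_of_covariance_eq_zero h'
  have hd : ∀ p q, S.centeredGram T p q = 0 := by
    intro p q
    have hpq := h p q
    rw [covariance_apply, integral_mul_eq_centeredGram, hρ, hρ', hm] at hpq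
    linarith
  simp [discrepancy, hm, hρ, hρ', hd, fun p q => T.centeredGram_comm S p q]

theorem discrepancy_comm : S.discrepancy T = T.discrepancy S := by
  simp only [discrepancy, S.integral_centeredGram_sq_comm T, T.scoreProduct_comm S,
    fun p => T.centeredGram_comm S p p, add_comm (T.scoreResponse S _),
    add_comm (T.centeredGram S _ _)]

theorem ae_ae_centeredGram_eq_zero (h : S.discrepancy T = 0) :
    ∀ᵐ p ∂μ, ∀ᵐ q ∂μ, S.centeredGram T p q = 0 := by
  have hle : ∫ p, ∫ q, S.centeredGram T p q ^ 2 ∂μ ∂μ ≤ 0 := by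
    refine (mul_nonpos_iff_pos_imp_nonpos.mp (le_of_le_of_eq ?_ h)).1 two_pos
    unfold discrepancy
    simp only [add_assoc]
    exact le_add_of_nonneg_right (by positivity)
  exact ae_ae_eq_zero_of_integral_integral_sq_eq_zero (by fun_prop)
    (hle.antisymm (by positivity))

theorem ae_forall_covariance_eq (h : S.discrepancy T = 0) :
    ∀ᵐ q ∂μ, ∀ p, cov[S p, T q; μ] = -∫ z, S p z * T.score z ∂μ := by
  rw [discrepancy_comm] at h
  filter_upwards [ae_ae_centeredGram_eq_zero h] with q hq p
  rw [covariance_apply_eq, S.integral_mul_eq_zero_of_ae_eq_const (g := T.centered q)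
    (c := -∫ z, S.score z * T.centered q z ∂μ) (by fun_prop) (T.integral_centered q), zero_sub]
  filter_upwards [hq] with p hp
  rw [← S.centeredGram_comm T, centeredGram,
    S.integral_centered_mul (by fun_prop) (T.integral_centered q)] at hp
  linarith

theorem covariance_eq_zero_of_discrepancy_eq_zero (h : S.discrepancy T = 0) (p q : Ω) :
    cov[S p, T q; μ] = 0 := by
  have hS := ae_forall_covariance_eq h
  have hT := ae_forall_covariance_eq (discrepancy_comm.symm.trans h)
  obtain ⟨q₀, hq₀⟩ := hS.exists
  have hscore : ∀ p, ∫ z, S p z * T.score z ∂μ = 0 := by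
    refine S.integral_mul_eq_zero_of_ae_eq_const (c := ∫ z, T q₀ z * S.score z ∂μ)
      (by fun_prop) T.integral_score ?_
    filter_upwards [hT] with p hp
    linarith [hq₀ p, hp q₀, S.covariance_apply_comm T p q₀]
  have hresidual : ∀ q, ∫ z, T q z * (S p z - S.score p) ∂μ = cov[S p, T q; μ] := by
    intro q
    rw [covariance_apply_comm, covariance_apply]
    simp (disch := fun_prop) only [mul_sub, BoundedMeasurable.integral_sub, integral_mul_const,
      integral_apply]
  rw [← hresidual]
  refine T.integral_mul_eq_zero_of_ae_eq_const (c := 0) (by fun_prop) ?_ ?_ q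
  · simp (disch := fun_prop) only [BoundedMeasurable.integral_sub, integral_const,
      probReal_univ, smul_eq_mul, one_mul, integral_apply, sub_self]
  · filter_upwards [hS] with q hq
    rw [hresidual, hq, hscore, neg_zero]

theorem discrepancy_eq_zero_iff :
    S.discrepancy T = 0 ↔ ∀ p q, cov[S p, T q; μ] = 0 :=
  ⟨covariance_eq_zero_of_discrepancy_eq_zero, discrepancy_eq_zero_of_covariance_eq_zero⟩

end Uncorrelated

end Equality

end OrderKernel

section OrderSign

variable {α β : Type*} [LinearOrder α] [LinearOrder β]

/-- The order comparison of two points, as the integer `1`, `0` or `-1` according to whether the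
first is larger than, equal to or smaller than the second. -/
def orderSign (a b : α) : ℤ := if b < a then 1 else if a < b then -1 else 0

theorem orderSign_swap (a b : α) : orderSign a b = -orderSign b a := by
  rcases lt_trichotomy a b with h | h | h <;> simp [orderSign, h, h.not_gt]

theorem abs_orderSign_le_one (a b : α) : |orderSign a b| ≤ 1 := by
  unfold orderSign
  split_ifs <;> simp

theorem orderSign_congr {a b : α} {c d : β} (hlt : a < b ↔ c < d) (hgt : b < a ↔ d < c) :
    orderSign a b = orderSign c d := by
  simp only [orderSign, hlt, hgt]

theorem orderSign_mul_orderSign {a b c : α} (h : c ≠ a) :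
    orderSign a c * orderSign b c =
      1 - orderSign a b * (orderSign a c - orderSign b c) := by
  grind [orderSign]

variable [TopologicalSpace α] [OrderClosedTopology α] [SecondCountableTopology α]
  [MeasurableSpace α] [OpensMeasurableSpace α]

theorem measurable_orderSign : Measurable fun x : α × α => orderSign x.1 x.2 :=
  .ite (measurableSet_lt measurable_snd measurable_fst) measurable_const
    (.ite (measurableSet_lt measurable_fst measurable_snd) measurable_const measurable_const)

variable {Ω : Type*} [MeasurableSpace Ω] {μ : Measure Ω} {f : Ω → α}

/-- The sign kernel of the order pulled back along a random variable without atoms. -/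
def OrderKernel.ofMeasurable (hf : Measurable f) [NullSingletonClass (μ.map f)] :
    OrderKernel μ where
  toFun p q := orderSign (f p) (f q)
  boundedMeasurable_uncurry := by
    refine ⟨?_, 1, ?_⟩
    · exact measurable_from_top.comp (measurable_orderSign.comp (hf.prodMap hf))
    · rintro ⟨p, q⟩
      simpa only [Function.uncurry] using mod_cast abs_orderSign_le_one (f p) (f q)
  antisymm' p q := by rw [orderSign_swap, Int.cast_neg]
  mul_eq' p q := by
    filter_upwards [ae_of_ae_map hf.aemeasurable (Measure.ae_ne _ (f p))] with z hz
    exact_mod_cast orderSign_mul_orderSign hz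

end OrderSign

section Patterns

variable {α β : Type*} [LinearOrder α] [LinearOrder β] {k : ℕ} {x : Fin k → α} {y : Fin k → β}
  {π π' σ τ : Equiv.Perm (Fin k)}

/-- The points `(x i, y i)`, listed by increasing `x`-coordinate, have `y`-coordinates in the
relative order of `π`. -/
def HasPattern (x : Fin k → α) (y : Fin k → β) (π : Equiv.Perm (Fin k)) : Prop :=
  ∃ σ : Equiv.Perm (Fin k),
    StrictMono (fun i => x (σ i)) ∧ ∀ i j, y (σ i) < y (σ j) ↔ π i < π j

theorem strictMono_comp_perm_unique (hσ : StrictMono fun i => x (σ i))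
    (hτ : StrictMono fun i => x (τ i)) : σ = τ := by
  have hx : Function.Injective x := by
    simpa [Function.comp_def] using hσ.injective.comp σ.symm.injective
  exact Equiv.ext fun i => hx (congrFun (Tuple.unique_monotone hσ.monotone hτ.monotone) i)

theorem exists_strictMono_comp_perm (hx : Function.Injective x) :
    ∃ σ : Equiv.Perm (Fin k), StrictMono fun i => x (σ i) :=
  ⟨Tuple.sort x, (Tuple.monotone_sort x).strictMono_of_injective
    (hx.comp (Tuple.sort x).injective)⟩

theorem HasPattern.unique (h : HasPattern x y π) (h' : HasPattern x y π') : π = π' := by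
  obtain ⟨σ, hx, hy⟩ := h
  obtain ⟨σ', hx', hy'⟩ := h'
  obtain rfl := strictMono_comp_perm_unique hx hx'
  have hsymm : ∀ {π : Equiv.Perm (Fin k)}, (∀ i j, y (σ i) < y (σ j) ↔ π i < π j) →
      StrictMono fun i => y (σ (π.symm i)) := fun hπ i j hij => by simpa [hπ] using hij
  exact Equiv.symm_bijective.injective
    (strictMono_comp_perm_unique (x := y ∘ σ) (hsymm hy) (hsymm hy'))

theorem exists_hasPattern (hx : Function.Injective x) (hy : Function.Injective y) :
    ∃ π, HasPattern x y π := by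
  obtain ⟨σ, hσ⟩ := exists_strictMono_comp_perm hx
  obtain ⟨τ, hτ⟩ := exists_strictMono_comp_perm (hy.comp σ.injective)
  refine ⟨τ.symm, σ, hσ, fun i j => ?_⟩
  simpa using hτ.lt_iff_lt (a := τ.symm i) (b := τ.symm j)

end Patterns

section FourPointKernel

/-- The patterns `1234, 1243, 1432, 2134, 2143, 2341, 3214, 3412, 3421, 4123, 4312, 4321`. -/
def forcingPatterns : Finset (Equiv.Perm (Fin 4)) :=
  {mk4 0 1 2 3, mk4 0 1 3 2, mk4 0 3 2 1, mk4 1 0 2 3, mk4 1 0 3 2, mk4 1 2 3 0,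
    mk4 2 1 0 3, mk4 2 3 0 1, mk4 2 3 1 0, mk4 3 0 1 2, mk4 3 2 0 1, mk4 3 2 1 0}

/-- The polynomial in the sign matrices of four points in two linear orders whose expectation is
`24` times the discrepancy of the orders, see `OrderKernel.integral_fourPointKernel`. -/
def fourPointKernel {R : Type*} [CommRing R] (x y : Fin 4 → Fin 4 → R) : R :=
  9 * ((x 0 2 * y 0 2) * (x 1 2 * y 1 2) * ((x 0 3 * y 0 3) * (x 1 3 * y 1 3))) - 1 -
    6 * ((x 0 2 * y 0 2) * (x 1 3 * y 1 3)) + 18 * ((x 0 2 * y 1 2) * (x 1 3 * y 0 3)) +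
    6 * ((x 0 2 * (y 0 2 * y 1 2)) * (x 1 3 * (y 1 3 * y 0 3)) +
      (y 0 2 * (x 0 2 * x 1 2)) * (y 1 3 * (x 1 3 * x 0 3)))

theorem intCast_fourPointKernel {R : Type*} [CommRing R] (x y : Fin 4 → Fin 4 → ℤ) :
    ((fourPointKernel x y : ℤ) : R) =
      fourPointKernel (fun i j => (x i j : R)) fun i j => y i j := by
  simp only [fourPointKernel]
  push_cast
  rfl

theorem sum_perm_fourPointKernel_orderSign : ∀ π : Equiv.Perm (Fin 4),
    ∑ σ : Equiv.Perm (Fin 4), fourPointKernel (fun i j => orderSign (σ i) (σ j))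
      (fun i j => orderSign (π (σ i)) (π (σ j))) = if π ∈ forcingPatterns then 192 else -192 := by
  decide +kernel

variable {α β : Type*} [LinearOrder α] [LinearOrder β]

theorem HasPattern.sum_perm_fourPointKernel {x : Fin 4 → α} {y : Fin 4 → β}
    {π : Equiv.Perm (Fin 4)} (h : HasPattern x y π) :
    ∑ σ : Equiv.Perm (Fin 4), fourPointKernel (fun i j => orderSign (x (σ i)) (x (σ j)))
      (fun i j => orderSign (y (σ i)) (y (σ j))) =
      if π ∈ forcingPatterns then 192 else -192 := by
  obtain ⟨τ, hx, hy⟩ := h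
  have hx' : ∀ i j, orderSign (x (τ i)) (x (τ j)) = orderSign i j := fun i j =>
    orderSign_congr hx.lt_iff_lt hx.lt_iff_lt
  have hy' : ∀ i j, orderSign (y (τ i)) (y (τ j)) = orderSign (π i) (π j) := fun i j =>
    orderSign_congr (hy i j) (hy j i)
  rw [← sum_perm_fourPointKernel_orderSign π, ← Equiv.sum_comp (Equiv.mulLeft τ)]
  simp only [Equiv.coe_mulLeft, Equiv.Perm.mul_apply, hx', hy']

open scoped Classical in
theorem sum_perm_fourPointKernel_eq {x : Fin 4 → α} {y : Fin 4 → β} (hx : Function.Injective x)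
    (hy : Function.Injective y) :
    ∑ σ : Equiv.Perm (Fin 4), fourPointKernel (fun i j => orderSign (x (σ i)) (x (σ j)))
      (fun i j => orderSign (y (σ i)) (y (σ j))) =
      384 * (∑ π ∈ forcingPatterns, if HasPattern x y π then 1 else 0) - 192 := by
  obtain ⟨π, hπ⟩ := exists_hasPattern hx hy
  have hiff : ∀ π', HasPattern x y π' ↔ π' = π :=
    fun π' => ⟨fun h => h.unique hπ, fun h => h ▸ hπ⟩
  simp only [hπ.sum_perm_fourPointKernel, hiff, Finset.sum_ite_eq']
  split_ifs <;> norm_num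

end FourPointKernel

section Sampling

variable {Ω : Type*} [MeasurableSpace Ω] {μ : Measure Ω} [IsProbabilityMeasure μ]

theorem integral_pi_comp_perm {ι : Type*} [Fintype ι] (σ : Equiv.Perm ι) (F : (ι → Ω) → ℝ) :
    ∫ p, F (fun i => p (σ i)) ∂Measure.pi (fun _ => μ) = ∫ p, F p ∂Measure.pi fun _ => μ :=
  (measurePreserving_arrowCongr' (fun _ => μ) (fun _ => μ) σ.symm (MeasurableEquiv.refl Ω)
    fun _ => .id μ).integral_comp' F

theorem BoundedMeasurable.integral_pi_fin_succ {n : ℕ} {F : (Fin (n + 1) → Ω) → ℝ}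
    (hF : BoundedMeasurable F) :
    ∫ p, F p ∂Measure.pi (fun _ => μ) =
      ∫ x, ∫ p, F (Matrix.vecCons x p) ∂Measure.pi (fun _ => μ) ∂μ := by
  have e := (measurePreserving_piFinSuccAbove (fun _ : Fin (n + 1) => μ) 0).symm
  rw [← e.integral_comp', integral_prod]
  · simp [MeasurableEquiv.piFinSuccAbove, Fin.consEquiv, Matrix.vecCons]
  · exact (hF.comp_measurable e.measurable).integrable

theorem BoundedMeasurable.integral_pi_fin_four {F : (Fin 4 → Ω) → ℝ} (hF : BoundedMeasurable F) :
    ∫ p, F p ∂Measure.pi (fun _ => μ) = ∫ p, ∫ q, ∫ z, ∫ w, F ![p, q, z, w] ∂μ ∂μ ∂μ ∂μ := by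
  have hcons : ∀ {n : ℕ} {F : (Fin (n + 1) → Ω) → ℝ}, BoundedMeasurable F → ∀ x,
      BoundedMeasurable fun p => F (Matrix.vecCons x p) := by
    intro n F hF x
    exact hF.comp_measurable
      (measurable_pi_iff.2 (Fin.cases measurable_const fun i => measurable_pi_apply i))
  rw [hF.integral_pi_fin_succ]
  congr 1 with p
  rw [(hcons hF p).integral_pi_fin_succ]
  congr 1 with q
  rw [(hcons (hcons hF p) q).integral_pi_fin_succ]
  congr 1 with z
  rw [(hcons (hcons (hcons hF p) q) z).integral_pi_fin_succ]
  congr 1 with w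
  rw [integral_unique, probReal_univ, one_smul, Subsingleton.elim default ![]]

theorem OrderKernel.integral_fourPointKernel (S T : OrderKernel μ) :
    ∫ p, fourPointKernel (fun i j => S (p i) (p j)) (fun i j => T (p i) (p j))
      ∂Measure.pi (fun _ => μ) = 24 * S.discrepancy T := by
  rw [BoundedMeasurable.integral_pi_fin_four (by unfold fourPointKernel; fun_prop)]
  simp (disch := fun_prop) only [fourPointKernel, Matrix.cons_val,
    BoundedMeasurable.integral_add, BoundedMeasurable.integral_sub, integral_const_mul,
    integral_mul_const, integral_const, probReal_univ, smul_eq_mul, ← sq]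
  linear_combination -3 * S.eight_mul_discrepancy T

theorem OrderKernel.integral_sum_perm_fourPointKernel (S T : OrderKernel μ) :
    ∫ p, ∑ σ : Equiv.Perm (Fin 4), fourPointKernel (fun i j => S (p (σ i)) (p (σ j)))
      (fun i j => T (p (σ i)) (p (σ j))) ∂Measure.pi (fun _ => μ) = 576 * S.discrepancy T := by
  set K : (Fin 4 → Ω) → ℝ :=
    fun p => fourPointKernel (fun i j => S (p i) (p j)) (fun i j => T (p i) (p j))
  have hKm : BoundedMeasurable K := by
    unfold K fourPointKernel
    fun_prop
  calc ∫ p, ∑ σ : Equiv.Perm (Fin 4), K (fun i => p (σ i)) ∂Measure.pi (fun _ => μ)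
    _ = ∑ σ : Equiv.Perm (Fin 4), ∫ p, K (fun i => p (σ i)) ∂Measure.pi (fun _ => μ) :=
      integral_finsetSum _ fun σ _ => (hKm.comp_measurable (by fun_prop)).integrable
    _ = ∑ σ : Equiv.Perm (Fin 4), 24 * S.discrepancy T :=
      Finset.sum_congr rfl fun σ _ =>
        (integral_pi_comp_perm σ K).trans (S.integral_fourPointKernel T)
    _ = 576 * S.discrepancy T := by
      rw [Finset.sum_const, Finset.card_univ, Fintype.card_perm, Fintype.card_fin, nsmul_eq_mul,
        show Nat.factorial 4 = 24 from rfl, Nat.cast_ofNat]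
      ring

section AtomlessCoordinates

variable {ι α : Type*} [Fintype ι] [MeasurableSpace α] [MeasurableEq α] {f : Ω → α}

theorem ae_apply_ne_apply_of_ne (hf : Measurable f) [NullSingletonClass (μ.map f)] {i j : ι}
    (hij : i ≠ j) : ∀ᵐ p ∂Measure.pi fun _ : ι => μ, f (p i) ≠ f (p j) := by
  have hi : ∀ i : ι, Measurable fun p : ι → Ω => f (p i) := fun i => by fun_prop
  have hmap : (Measure.pi fun _ : ι => μ).map (fun p => f (p j)) = μ.map f := by
    conv_rhs => rw [← (measurePreserving_eval (fun _ : ι => μ) j).map_eq]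
    exact (Measure.map_map hf (measurable_pi_apply j)).symm
  have hindep := (ProbabilityTheory.iIndepFun_pi (μ := fun _ : ι => μ) (X := fun _ => f)
    fun _ => hf.aemeasurable).indepFun hij
  have hdiag : ∀ᵐ x ∂(Measure.pi fun _ : ι => μ).map fun p => (f (p i), f (p j)),
      x.1 ≠ x.2 := by
    rw [(ProbabilityTheory.indepFun_iff_map_prod_eq_prod_map_map (hi i).aemeasurable
      (hi j).aemeasurable).1 hindep, hmap]
    refine (Measure.ae_prod_iff_ae_ae
      (measurableSet_eq_fun measurable_fst measurable_snd).compl).2 ?_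
    exact .of_forall fun x => (Measure.ae_ne (μ.map f) x).mono fun y hy => hy.symm
  exact ae_of_ae_map ((hi i).prodMk (hi j)).aemeasurable hdiag

theorem ae_injective_comp (hf : Measurable f) [NullSingletonClass (μ.map f)] :
    ∀ᵐ p ∂Measure.pi fun _ : ι => μ, Function.Injective fun i => f (p i) := by
  have hne : ∀ i j : ι, ∀ᵐ p ∂Measure.pi fun _ : ι => μ, i ≠ j → f (p i) ≠ f (p j) := by
    intro i j
    by_cases hij : i = j
    · exact .of_forall fun _ h => (h hij).elim
    · exact (ae_apply_ne_apply_of_ne hf hij).mono fun _ h _ => h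
  filter_upwards [ae_all_iff.2 fun i => ae_all_iff.2 (hne i)] with p hp i j hij
  exact not_imp_comm.1 (hp i j) (not_not.2 hij)

end AtomlessCoordinates

end Sampling

section PatternProbability

variable {Ω : Type*} [MeasurableSpace Ω]
variable {α : Type*} [LinearOrder α] [TopologicalSpace α] [OrderClosedTopology α]
  [SecondCountableTopology α] [MeasurableSpace α] [OpensMeasurableSpace α]
variable {β : Type*} [LinearOrder β] [TopologicalSpace β] [OrderClosedTopology β]
  [SecondCountableTopology β] [MeasurableSpace β] [OpensMeasurableSpace β]
variable {f : Ω → α} {g : Ω → β}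

theorem measurableSet_hasPattern (hf : Measurable f) (hg : Measurable g) {k : ℕ}
    (π : Equiv.Perm (Fin k)) :
    MeasurableSet {p : Fin k → Ω | HasPattern (fun i => f (p i)) (fun i => g (p i)) π} := by
  refine Measurable.setOf (.exists fun σ => .and ?_ ?_)
  · exact .forall fun i => .forall fun j => .imp measurable_const (measurableSet_setOfPred.1 <|
      measurableSet_lt (by fun_prop) (by fun_prop))
  · exact .forall fun i => .forall fun j => .iff (measurableSet_setOfPred.1 <|
      measurableSet_lt (by fun_prop) (by fun_prop)) measurable_const

variable {μ : Measure Ω}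

theorem sum_perm_fourPointKernel_ofMeasurable_eq (hf : Measurable f)
    [NullSingletonClass (μ.map f)] (hg : Measurable g) [NullSingletonClass (μ.map g)]
    {p : Fin 4 → Ω} (hfp : Function.Injective fun i => f (p i))
    (hgp : Function.Injective fun i => g (p i)) :
    ∑ σ : Equiv.Perm (Fin 4), fourPointKernel
        (fun i j => OrderKernel.ofMeasurable (μ := μ) hf (p (σ i)) (p (σ j)))
        (fun i j => OrderKernel.ofMeasurable (μ := μ) hg (p (σ i)) (p (σ j))) =
      384 * ∑ π ∈ forcingPatterns,
        {p | HasPattern (fun i => f (p i)) (fun i => g (p i)) π}.indicator 1 p - 192 := by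
  classical
  have h := congrArg (Int.cast : ℤ → ℝ) (sum_perm_fourPointKernel_eq hfp hgp)
  simp only [Int.cast_sum, intCast_fourPointKernel] at h
  refine h.trans ?_
  simp [Set.indicator_apply]

theorem sum_forcingPatterns_eq [IsProbabilityMeasure μ] (hf : Measurable f)
    [NullSingletonClass (μ.map f)] (hg : Measurable g) [NullSingletonClass (μ.map g)] :
    ∑ π ∈ forcingPatterns, (Measure.pi fun _ : Fin 4 => μ).real
        {p | HasPattern (fun i => f (p i)) (fun i => g (p i)) π} =
      1 / 2 + 3 / 2 *
        (OrderKernel.ofMeasurable (μ := μ) hf).discrepancy (OrderKernel.ofMeasurable hg) := by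
  have hmeas := measurableSet_hasPattern hf hg (k := 4)
  have hint : ∀ π : Equiv.Perm (Fin 4), Integrable
      ({p | HasPattern (fun i => f (p i)) (fun i => g (p i)) π}.indicator 1 : (Fin 4 → Ω) → ℝ)
      (Measure.pi fun _ => μ) := fun π => (integrable_const (1 : ℝ)).indicator (hmeas π)
  have h := (OrderKernel.ofMeasurable (μ := μ) hf).integral_sum_perm_fourPointKernel
    (OrderKernel.ofMeasurable hg)
  rw [integral_congr_ae ((ae_injective_comp hf).mp ((ae_injective_comp hg).mono
      fun p hgp hfp => sum_perm_fourPointKernel_ofMeasurable_eq hf hg hfp hgp)),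
    integral_sub ((integrable_finsetSum _ fun π _ => hint π).const_mul 384) (integrable_const _),
    integral_const_mul, integral_finsetSum _ fun π _ => hint π] at h
  simp only [integral_indicator_one (hmeas _), integral_const, probReal_univ, smul_eq_mul] at h
  linarith

end PatternProbability

section Independence

open ProbabilityTheory

variable {Ω : Type*} [MeasurableSpace Ω] {μ : Measure Ω}
variable {α : Type*} [LinearOrder α] [TopologicalSpace α] [OrderTopology α]
  [SecondCountableTopology α] [MeasurableSpace α] [BorelSpace α]
variable {β : Type*} [LinearOrder β] [TopologicalSpace β] [OrderTopology β]
  [SecondCountableTopology β] [MeasurableSpace β] [BorelSpace β]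
variable {f : Ω → α} {g : Ω → β}

theorem covariance_congr_ae {X X' Y Y' : Ω → ℝ} (hX : X =ᵐ[μ] X') (hY : Y =ᵐ[μ] Y') :
    cov[X, Y; μ] = cov[X', Y'; μ] := by
  rw [covariance, covariance, integral_congr_ae hX, integral_congr_ae hY]
  exact integral_congr_ae (by filter_upwards [hX, hY] with z hXz hYz using by rw [hXz, hYz])

theorem OrderKernel.ofMeasurable_ae_eq (hf : Measurable f) [NullSingletonClass (μ.map f)]
    (p : Ω) : OrderKernel.ofMeasurable (μ := μ) hf p =ᵐ[μ]
      fun z => 2 * (f ⁻¹' Set.Iic (f p)).indicator 1 z - 1 := by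
  filter_upwards [ae_of_ae_map hf.aemeasurable (Measure.ae_ne _ (f p))] with z hz
  rcases lt_or_gt_of_ne hz with h | h
  · simp only [OrderKernel.ofMeasurable, orderSign, if_pos h, Set.indicator, Set.mem_preimage,
      Set.mem_Iic, if_pos h.le]
    norm_num
  · simp [OrderKernel.ofMeasurable, orderSign, h, h.not_gt]

theorem indepFun_fst_snd_iff_eq_prod {Ω' : Type*} [MeasurableSpace Ω'] {μ : Measure (Ω × Ω')}
    [IsFiniteMeasure μ] : IndepFun Prod.fst Prod.snd μ ↔ μ = μ.fst.prod μ.snd := by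
  rw [indepFun_iff_map_prod_eq_prod_map_map (by fun_prop) (by fun_prop), Measure.map_id']
  rfl

variable [IsProbabilityMeasure μ]

theorem indepFun_iff_measureReal_inter_preimage_Iic_eq_mul (hf : Measurable f)
    (hg : Measurable g) : IndepFun f g μ ↔ ∀ a b, μ.real (f ⁻¹' Set.Iic a ∩ g ⁻¹' Set.Iic b) =
      μ.real (f ⁻¹' Set.Iic a) * μ.real (g ⁻¹' Set.Iic b) := by
  refine ⟨fun h a b => ?_, fun h => ?_⟩
  · simp only [measureReal_def, ← ENNReal.toReal_mul,
      h.measure_inter_preimage_eq_mul _ _ measurableSet_Iic measurableSet_Iic]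
  · refine (IndepFun_iff_Indep f g μ).2 (IndepSets.indep hf.comap_le hg.comap_le
      (isPiSystem_Iic.comap f) (isPiSystem_Iic.comap g) ?_ ?_ ?_)
    · rw [BorelSpace.measurable_eq (α := α), borel_eq_generateFrom_Iic,
        MeasurableSpace.comap_generateFrom]
      rfl
    · rw [BorelSpace.measurable_eq (α := β), borel_eq_generateFrom_Iic,
        MeasurableSpace.comap_generateFrom]
      rfl
    · refine (IndepSets_iff _ _ μ).2 ?_
      rintro _ _ ⟨_, ⟨a, rfl⟩, rfl⟩ ⟨_, ⟨b, rfl⟩, rfl⟩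
      rw [← ENNReal.toReal_eq_toReal_iff' (by finiteness) (by finiteness), ENNReal.toReal_mul]
      exact h a b

theorem covariance_indicator_one {A B : Set Ω} (hA : MeasurableSet A) (hB : MeasurableSet B) :
    cov[A.indicator 1, B.indicator 1; μ] = μ.real (A ∩ B) - μ.real A * μ.real B := by
  have hmem {A : Set Ω} (hA : MeasurableSet A) : MemLp (A.indicator (1 : Ω → ℝ)) 2 μ :=
    (memLp_const 1).indicator hA
  rw [covariance_eq_sub (hmem hA) (hmem hB), ← Set.inter_indicator_one,
    integral_indicator_one (hA.inter hB), integral_indicator_one hA, integral_indicator_one hB]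

theorem OrderKernel.covariance_ofMeasurable (hf : Measurable f) [NullSingletonClass (μ.map f)]
    (hg : Measurable g) [NullSingletonClass (μ.map g)] (p q : Ω) :
    cov[OrderKernel.ofMeasurable (μ := μ) hf p, OrderKernel.ofMeasurable (μ := μ) hg q; μ] =
      4 * (μ.real (f ⁻¹' Set.Iic (f p) ∩ g ⁻¹' Set.Iic (g q)) -
        μ.real (f ⁻¹' Set.Iic (f p)) * μ.real (g ⁻¹' Set.Iic (g q))) := by
  have hA : MeasurableSet (f ⁻¹' Set.Iic (f p)) := hf measurableSet_Iic
  have hB : MeasurableSet (g ⁻¹' Set.Iic (g q)) := hg measurableSet_Iic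
  have hint {A : Set Ω} (hA : MeasurableSet A) :
      Integrable (fun z => 2 * A.indicator (1 : Ω → ℝ) z) μ :=
    ((integrable_const 1).indicator hA).const_mul 2
  rw [covariance_congr_ae (OrderKernel.ofMeasurable_ae_eq hf p)
      (OrderKernel.ofMeasurable_ae_eq hg q), covariance_sub_const_left (hint hA),
    covariance_sub_const_right (hint hB), covariance_const_mul_left, covariance_const_mul_right,
    covariance_indicator_one hA hB]
  ring

theorem OrderKernel.discrepancy_ofMeasurable_eq_zero_iff (hf : Measurable f)
    [NullSingletonClass (μ.map f)] (hf' : Function.Surjective f) (hg : Measurable g)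
    [NullSingletonClass (μ.map g)] (hg' : Function.Surjective g) :
    (OrderKernel.ofMeasurable (μ := μ) hf).discrepancy (OrderKernel.ofMeasurable hg) = 0 ↔
      IndepFun f g μ := by
  simp [OrderKernel.discrepancy_eq_zero_iff, OrderKernel.covariance_ofMeasurable,
    indepFun_iff_measureReal_inter_preimage_Iic_eq_mul hf hg, hf'.forall, hg'.forall, sub_eq_zero]

end Independence

section Permutons

theorem eq_volume_restrict_Icc {ν : Measure ℝ} [IsProbabilityMeasure ν]
    (h : ∀ x x', 0 ≤ x → x ≤ x' → x' ≤ 1 → ν (Set.Icc x x') = ENNReal.ofReal (x' - x)) :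
    ν = volume.restrict (Set.Icc 0 1) := by
  have hae : ∀ᵐ x ∂ν, x ∈ Set.Icc (0 : ℝ) 1 :=
    (prob_compl_eq_zero_iff measurableSet_Icc).2 (by simp [h 0 1])
  rw [← Measure.restrict_eq_self_of_ae_mem hae]
  refine Measure.ext_of_Icc _ _ fun a b _ => ?_
  rw [Measure.restrict_apply measurableSet_Icc, Measure.restrict_apply measurableSet_Icc,
    Set.Icc_inter_Icc, Real.volume_Icc]
  rcases le_or_gt (a ⊔ 0) (b ⊓ 1) with hab | hab
  · exact h _ _ le_sup_right hab inf_le_right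
  · rw [Set.Icc_eq_empty hab.not_ge, measure_empty, ENNReal.ofReal_of_nonpos (by linarith)]

variable {μ : Measure (ℝ × ℝ)}

theorem IsPermuton.ae_mem_unitSquare (hμ : IsPermuton μ) :
    ∀ᵐ z ∂μ, z ∈ Set.Icc (0 : ℝ) 1 ×ˢ Set.Icc (0 : ℝ) 1 := by
  have := hμ.1
  exact (prob_compl_eq_zero_iff (measurableSet_Icc.prod measurableSet_Icc)).2
    ((hμ.2.1 0 1 le_rfl zero_le_one le_rfl).trans (by simp))

theorem IsPermuton.fst_eq (hμ : IsPermuton μ) : μ.fst = volume.restrict (Set.Icc 0 1) := by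
  have := hμ.1
  refine eq_volume_restrict_Icc fun x x' hx hxx' hx' => ?_
  rw [Measure.fst_apply measurableSet_Icc, ← hμ.2.1 x x' hx hxx' hx']
  exact measure_congr <| hμ.ae_mem_unitSquare.mono fun z hz =>
    propext ⟨fun h => ⟨h, hz.2⟩, fun h => h.1⟩

theorem IsPermuton.snd_eq (hμ : IsPermuton μ) : μ.snd = volume.restrict (Set.Icc 0 1) := by
  have := hμ.1
  refine eq_volume_restrict_Icc fun y y' hy hyy' hy' => ?_
  rw [Measure.snd_apply measurableSet_Icc, ← hμ.2.2 y y' hy hyy' hy']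
  exact measure_congr <| hμ.ae_mem_unitSquare.mono fun z hz =>
    propext ⟨fun h => ⟨hz.1, h⟩, fun h => h.2⟩

theorem uniformPermuton_eq_prod :
    uniformPermuton = (volume.restrict (Set.Icc 0 1)).prod (volume.restrict (Set.Icc 0 1)) :=
  (Measure.prod_restrict _ _).symm

end Permutons

theorem statement_10_general (μ : Measure (ℝ × ℝ)) [IsProbabilityMeasure μ]
    [NullSingletonClass μ.fst] [NullSingletonClass μ.snd] :
    1 / 2 ≤ ∑ π ∈ forcingPatterns, PermutonDensity π μ ∧
      (∑ π ∈ forcingPatterns, PermutonDensity π μ = 1 / 2 ↔ μ = μ.fst.prod μ.snd) := by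
  have : NullSingletonClass (μ.map Prod.fst) := ‹NullSingletonClass μ.fst›
  have : NullSingletonClass (μ.map Prod.snd) := ‹NullSingletonClass μ.snd›
  set S := OrderKernel.ofMeasurable (μ := μ) measurable_fst
  set T := OrderKernel.ofMeasurable (μ := μ) measurable_snd
  have hsum : ∑ π ∈ forcingPatterns, PermutonDensity π μ = 1 / 2 + 3 / 2 * S.discrepancy T :=
    sum_forcingPatterns_eq measurable_fst measurable_snd
  rw [hsum, ← indepFun_fst_snd_iff_eq_prod, ← OrderKernel.discrepancy_ofMeasurable_eq_zero_iff
    measurable_fst Prod.fst_surjective measurable_snd Prod.snd_surjective]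
  exact ⟨by linarith [S.discrepancy_nonneg T], by constructor <;> intro h <;> linarith⟩

end

theorem statement_10 (μ : Measure (ℝ × ℝ)) (hμ : IsPermuton μ) :
    (1 / 2 : ℝ) ≤ ∑ π ∈ ({
        mk4 0 1 2 3,
        mk4 0 1 3 2,
        mk4 0 3 2 1,
        mk4 1 0 2 3,
        mk4 1 0 3 2,
        mk4 1 2 3 0,
        mk4 2 1 0 3,
        mk4 2 3 0 1,
        mk4 2 3 1 0,
        mk4 3 0 1 2,
        mk4 3 2 0 1,
        mk4 3 2 1 0} : Finset (Equiv.Perm (Fin 4))), PermutonDensity π μ ∧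
      (∑ π ∈ ({
        mk4 0 1 2 3,
        mk4 0 1 3 2,
        mk4 0 3 2 1,
        mk4 1 0 2 3,
        mk4 1 0 3 2,
        mk4 1 2 3 0,
        mk4 2 1 0 3,
        mk4 2 3 0 1,
        mk4 2 3 1 0,
        mk4 3 0 1 2,
        mk4 3 2 0 1,
        mk4 3 2 1 0} : Finset (Equiv.Perm (Fin 4))), PermutonDensity π μ = (1 / 2 : ℝ) ↔
        μ = uniformPermuton) := by
  have := hμ.1
  have hfst : NullSingletonClass μ.fst := hμ.fst_eq ▸ inferInstance
  have hsnd : NullSingletonClass μ.snd := hμ.snd_eq ▸ inferInstance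
  have h := statement_10_general μ
  rwa [hμ.fst_eq, hμ.snd_eq, ← uniformPermuton_eq_prod] at h
end

section
/- Let A be an n×n doubly stochastic matrix and let π be a k-permutation. Then d(π, μ[A]) = (k!/n^k) · Σ_{f,g:[k]↗[n]} (Π_{i∈[n]} |f^{−1}(i)|!·|g^{−1}(i)|!)^{−1} · Π_{i∈[k]} A_{f(i),g(π(i))}, where the sum ranges over all pairs of non-decreasing functions f,g from {1,…,k} to {1,…,n}. -/
open MeasureTheory Filter

/-!
Up to relabelling, which costs a factor `k!`, the `k` sampled points have increasing
`x`-coordinates, and their `y`-coordinates increase when listed in the order `π⁻¹`. Choosing the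
cell of every point splits the `k`-th power of the step permuton into products of uniform measures
on intervals, on which the two conditions are independent. So it remains to find the mass `V f` of
increasing tuples whose `i`-th entry is drawn from the `f i`-th interval. It vanishes unless `f` is
monotone, as the intervals are ordered. As almost every tuple has exactly one increasing
rearrangement, the masses `V (f ∘ σ)` over all permutations `σ` add up to the total mass; if `f` is
monotone, the nonzero terms are those with `f ∘ σ = f`, there are `∏ m, |f⁻¹(m)|!` of them, and
they all equal `V f`.
-/

open scoped ENNReal NNReal Nat

section FiberFactorial

variable {ι κ : Type*} [Fintype ι] [Fintype κ] [DecidableEq κ]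

/-- The product of the factorials of the fibre sizes of `f`: the number of permutations of the
domain that preserve `f`. -/
def fiberFactorial (f : ι → κ) : ℕ :=
  ∏ m, (Finset.univ.filter fun i => f i = m).card !

theorem fiberFactorial_ne_zero (f : ι → κ) : fiberFactorial f ≠ 0 :=
  Finset.prod_ne_zero_iff.2 fun _ _ => Nat.factorial_ne_zero _

theorem card_perm_comp_eq_self [DecidableEq ι] (f : ι → κ) :
    (Finset.univ.filter fun σ : Equiv.Perm ι => f ∘ σ = f).card = fiberFactorial f := by
  simpa only [fiberFactorial, Fintype.card_subtype] using DomMulAct.stabilizer_card f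

end FiberFactorial

theorem perm_eq_of_strictMono_comp {k : ℕ} {α : Type*} [PartialOrder α] {x : Fin k → α}
    {σ τ : Equiv.Perm (Fin k)} (hσ : StrictMono (x ∘ σ)) (hτ : StrictMono (x ∘ τ)) : σ = τ := by
  have hx : Function.Injective x := (σ.injective_comp x).1 hσ.injective
  exact Equiv.coe_fn_injective (hx.comp_left (Tuple.unique_monotone hσ.monotone hτ.monotone))

theorem monotone_comp_perm_iff {k : ℕ} {α : Type*} [PartialOrder α] {f : Fin k → α}
    (hf : Monotone f) (σ : Equiv.Perm (Fin k)) : Monotone (f ∘ σ) ↔ f ∘ σ = f :=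
  ⟨fun h => Tuple.unique_monotone (τ := 1) h hf, fun h => h.symm ▸ hf⟩

theorem measurableSet_strictMono {ι α : Type*} [Preorder ι] [Countable ι] [LinearOrder α]
    [TopologicalSpace α] [OrderClosedTopology α] [SecondCountableTopology α] [MeasurableSpace α]
    [OpensMeasurableSpace α] : MeasurableSet {x : ι → α | StrictMono x} := by
  unfold StrictMono
  measurability

theorem measurePreserving_comp_perm {ι α : Type*} [Fintype ι] [MeasurableSpace α]
    (μ : ι → Measure α) [∀ i, SigmaFinite (μ i)] (σ : Equiv.Perm ι) :
    MeasurePreserving (fun p : ι → α => p ∘ σ) (Measure.pi μ) (Measure.pi fun i => μ (σ i)) :=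
  (measurePreserving_piCongrLeft μ σ).symm _

theorem ae_pi_ne {ι α : Type*} [Fintype ι] [MeasurableSpace α] [MeasurableEq α]
    (μ : ι → Measure α) [∀ i, SigmaFinite (μ i)] {i j : ι} (hij : i ≠ j)
    [NullSingletonClass (μ i)] : ∀ᵐ x ∂Measure.pi μ, x i ≠ x j := by
  classical
  let S : Set (ι → α) := {x | x i = x j}
  have hS : MeasurableSet S := measurableSet_eq_fun (measurable_pi_apply i) (measurable_pi_apply j)
  have slice_null (x : ι → α) : ∫⁻ a, S.indicator 1 (Function.update x i a) ∂μ i = 0 :=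
    calc ∫⁻ a, S.indicator 1 (Function.update x i a) ∂μ i
        = ∫⁻ a, ({x j} : Set α).indicator 1 a ∂μ i := by
          simp only [S, Set.indicator_apply, Set.mem_ofPred_eq, Function.update_self,
            Function.update_of_ne hij.symm, Set.mem_singleton_iff, Pi.one_apply]
      _ = 0 := by rw [lintegral_indicator_one (measurableSet_singleton _), measure_singleton]
  have S_null : Measure.pi μ S = 0 := by
    rcases isEmpty_or_nonempty (ι → α) with h | ⟨⟨x⟩⟩
    · simp only [Set.eq_empty_of_isEmpty, measure_empty]
    · rw [← lintegral_indicator_one hS, lintegral_eq_lmarginal_univ x,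
        lmarginal_erase' _ (measurable_one.indicator hS) (Finset.mem_univ i)]
      simp [slice_null, lmarginal]
  exact measure_eq_zero_iff_ae_notMem.1 S_null

theorem ae_pi_injective {ι α : Type*} [Fintype ι] [MeasurableSpace α] [MeasurableEq α]
    (μ : ι → Measure α) [∀ i, SigmaFinite (μ i)] [∀ i, NullSingletonClass (μ i)] :
    ∀ᵐ x ∂Measure.pi μ, Function.Injective x := by
  have ae_ne : ∀ᵐ x ∂Measure.pi μ, ∀ i j, i ≠ j → x i ≠ x j :=
    ae_all_iff.2 fun _ => ae_all_iff.2 fun _ =>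
      eventually_imp_distrib_left.2 fun hij => ae_pi_ne μ hij
  exact ae_ne.mono fun x hx i j => not_imp_not.1 (hx i j)

theorem pi_iUnion_comp_perm {k : ℕ} {α β : Type*} [MeasurableSpace α] [PartialOrder β]
    (μ : Fin k → Measure α) [∀ i, SigmaFinite (μ i)] (key : α → β) {E : Set (Fin k → α)}
    (hE : MeasurableSet E) (hkey : ∀ p ∈ E, StrictMono (key ∘ p)) :
    Measure.pi μ (⋃ σ : Equiv.Perm (Fin k), (· ∘ σ) ⁻¹' E) =
      ∑ σ : Equiv.Perm (Fin k), Measure.pi (fun i => μ (σ i)) E := by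
  have hσ (σ : Equiv.Perm (Fin k)) := measurePreserving_comp_perm μ σ
  rw [measure_iUnion _ fun σ => (hσ σ).measurable hE, tsum_fintype]
  · exact Finset.sum_congr rfl fun σ _ => (hσ σ).measure_preimage hE.nullMeasurableSet
  · exact fun σ τ hne => Set.disjoint_left.2 fun p hpσ hpτ =>
      hne (perm_eq_of_strictMono_comp (x := key ∘ p) (hkey _ hpσ) (hkey _ hpτ))

/-- The mass that the product of the measures `μ i` gives to the strictly increasing tuples. -/
noncomputable def increasingMass {k : ℕ} {α : Type*} [Preorder α] [MeasurableSpace α]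
    (μ : Fin k → Measure α) : ℝ≥0∞ :=
  Measure.pi μ {x | StrictMono x}

theorem sum_increasingMass_comp_perm {k : ℕ} {α : Type*} [LinearOrder α] [TopologicalSpace α]
    [OrderClosedTopology α] [SecondCountableTopology α] [MeasurableSpace α]
    [OpensMeasurableSpace α] (μ : Fin k → Measure α) [∀ i, SigmaFinite (μ i)]
    [∀ i, NullSingletonClass (μ i)] :
    ∑ σ : Equiv.Perm (Fin k), increasingMass (fun i => μ (σ i)) = ∏ i, μ i Set.univ := by
  have ae_sortable : ∀ᵐ x ∂Measure.pi μ,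
      x ∈ ⋃ σ : Equiv.Perm (Fin k), (· ∘ σ) ⁻¹' {x | StrictMono x} := by
    filter_upwards [ae_pi_injective μ] with x hx
    exact Set.mem_iUnion.2 ⟨Tuple.sort x, (Tuple.monotone_sort x).strictMono_of_injective
      (hx.comp (Tuple.sort x).injective)⟩
  calc ∑ σ : Equiv.Perm (Fin k), increasingMass (fun i => μ (σ i))
      = Measure.pi μ (⋃ σ : Equiv.Perm (Fin k), (· ∘ σ) ⁻¹' {x | StrictMono x}) :=
        (pi_iUnion_comp_perm μ id measurableSet_strictMono fun _ hx => hx).symm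
    _ = Measure.pi μ Set.univ := measure_congr (eventuallyEq_univ.2 ae_sortable)
    _ = ∏ i, μ i Set.univ := Measure.pi_univ μ

/-- The measures `ν a` are carried by sets that follow each other in the order of the indices;
consecutive sets may share an endpoint. -/
def IsOrderedFamily {ι α : Type*} [Preorder ι] [Preorder α] [MeasurableSpace α]
    (ν : ι → Measure α) : Prop :=
  ∃ s : ι → Set α, (∀ a, ∀ᵐ x ∂ν a, x ∈ s a) ∧
    ∀ ⦃a b⦄, a < b → ∀ x ∈ s a, ∀ y ∈ s b, x ≤ y

section OrderedFamily

variable {ι α : Type*} [LinearOrder ι] [MeasurableSpace α] {k : ℕ}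
  {ν : ι → Measure α} [∀ a, SigmaFinite (ν a)]

theorem increasingMass_eq_zero [Preorder α] (hν : IsOrderedFamily ν) {f : Fin k → ι}
    (hf : ¬ Monotone f) : increasingMass (fun i => ν (f i)) = 0 := by
  obtain ⟨s, hs, hsorted⟩ := hν
  obtain ⟨i, j, hij, hfji⟩ : ∃ i j, i ≤ j ∧ f j < f i := by
    simpa only [Monotone, not_forall, not_le, exists_prop] using hf
  have hi := Measure.tendsto_eval_ae_ae (μ := fun i => ν (f i)).eventually (hs (f i))
  have hj := Measure.tendsto_eval_ae_ae (μ := fun i => ν (f i)).eventually (hs (f j))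
  refine measure_eq_zero_iff_ae_notMem.2 ?_
  filter_upwards [hi, hj] with x hxi hxj hx
  have hlt : i < j := hij.lt_of_ne fun h => hfji.ne (h ▸ rfl)
  exact (hx hlt).not_ge (hsorted hfji _ hxj _ hxi)

variable [Fintype ι] [LinearOrder α] [TopologicalSpace α] [OrderClosedTopology α]
  [SecondCountableTopology α] [OpensMeasurableSpace α] [∀ a, NullSingletonClass (ν a)]

theorem increasingMass_of_monotone (hν : IsOrderedFamily ν) {f : Fin k → ι} (hf : Monotone f) :
    increasingMass (fun i => ν (f i)) =
      (fiberFactorial f : ℝ≥0∞)⁻¹ * ∏ i, ν (f i) Set.univ := by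
  have mass_comp_perm (σ : Equiv.Perm (Fin k)) : increasingMass (fun i => ν (f (σ i))) =
      if f ∘ σ = f then increasingMass (fun i => ν (f i)) else 0 := by
    split_ifs with h
    · exact congrArg (fun g : Fin k → ι => increasingMass fun i => ν (g i)) h
    · exact increasingMass_eq_zero hν (mt (monotone_comp_perm_iff hf σ).1 h)
  have total : fiberFactorial f * increasingMass (fun i => ν (f i)) = ∏ i, ν (f i) Set.univ := by
    rw [← sum_increasingMass_comp_perm, Finset.sum_congr rfl fun σ _ => mass_comp_perm σ,
      ← Finset.sum_filter, Finset.sum_const, nsmul_eq_mul, card_perm_comp_eq_self]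
  rw [← total, ENNReal.inv_mul_cancel_left (by simpa using fiberFactorial_ne_zero f)
    (ENNReal.natCast_ne_top _)]

open scoped Classical in
theorem toReal_increasingMass (hν : IsOrderedFamily ν) (f : Fin k → ι) :
    (increasingMass fun i => ν (f i)).toReal =
      if Monotone f then (fiberFactorial f : ℝ)⁻¹ * ∏ i, (ν (f i)).real Set.univ else 0 := by
  split_ifs with hf
  · rw [increasingMass_of_monotone hν hf, ENNReal.toReal_mul, ENNReal.toReal_inv,
      ENNReal.toReal_natCast, ENNReal.toReal_prod]
    rfl
  · rw [increasingMass_eq_zero hν hf, ENNReal.toReal_zero]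

end OrderedFamily

theorem pi_sum_smul {ι κ α : Type*} [Fintype ι] [Fintype κ] [DecidableEq ι] [MeasurableSpace α]
    (w : ι → κ → ℝ≥0) (m : ι → κ → Measure α) [∀ i c, IsFiniteMeasure (m i c)] :
    Measure.pi (fun i => ∑ c, w i c • m i c) =
      ∑ h : ι → κ, (∏ i, w i (h i)) • Measure.pi fun i => m i (h i) := by
  refine Measure.pi_eq fun s _ => ?_
  simp only [Measure.finsetSum_apply, Measure.smul_apply, Measure.pi_pi, Finset.prod_univ_sum,
    Fintype.piFinset_univ, Finset.prod_mul_distrib, ENNReal.smul_def, smul_eq_mul,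
    ENNReal.ofNNReal_finsetProd]

/-- The event that a sequence of points in the plane is listed by increasing `x`-coordinates and
has `y`-coordinates ordered according to `π`, the latter being the monotonicity of the
`y`-coordinates listed in the order `π⁻¹`. -/
def patternEvent {k : ℕ} (π : Equiv.Perm (Fin k)) : Set (Fin k → ℝ × ℝ) :=
  {p | StrictMono (fun i => (p i).1) ∧ StrictMono (fun i => (p (π.symm i)).2)}

theorem measurableSet_patternEvent {k : ℕ} (π : Equiv.Perm (Fin k)) :
    MeasurableSet (patternEvent π) := by
  have hx : Measurable fun (p : Fin k → ℝ × ℝ) i => (p i).1 := by fun_prop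
  have hy : Measurable fun (p : Fin k → ℝ × ℝ) i => (p (π.symm i)).2 := by fun_prop
  exact (hx measurableSet_strictMono).inter (hy measurableSet_strictMono)

theorem permutonDensity_eq_factorial_mul {k : ℕ} (π : Equiv.Perm (Fin k)) (μ : Measure (ℝ × ℝ))
    [SigmaFinite μ] :
    PermutonDensity π μ = k ! * (Measure.pi fun _ : Fin k => μ).real (patternEvent π) := by
  have event_eq : {p : Fin k → ℝ × ℝ | ∃ σ : Equiv.Perm (Fin k),
      StrictMono (fun i => (p (σ i)).1) ∧
        ∀ i j : Fin k, (p (σ i)).2 < (p (σ j)).2 ↔ π i < π j} =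
      ⋃ σ : Equiv.Perm (Fin k), (· ∘ σ) ⁻¹' patternEvent π := by
    ext p
    simp only [Set.mem_ofPred_eq, Set.mem_iUnion]
    refine exists_congr fun σ => and_congr_right fun _ => ⟨fun h i j hij => ?_, fun h i j => ?_⟩
    · exact (h _ _).2 (by simpa only [Equiv.apply_symm_apply] using hij)
    · simpa only [Function.comp_apply, Equiv.symm_apply_apply] using
        h.lt_iff_lt (a := π i) (b := π j)
  rw [PermutonDensity, event_eq,
    pi_iUnion_comp_perm _ Prod.fst (measurableSet_patternEvent π) fun _ hp => hp.1,
    Finset.sum_const, Finset.card_univ, Fintype.card_perm, Fintype.card_fin, nsmul_eq_mul,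
    ENNReal.toReal_mul, ENNReal.toReal_natCast, measureReal_def]

theorem pi_prod_patternEvent {k : ℕ} (π : Equiv.Perm (Fin k)) (ν ρ : Fin k → Measure ℝ)
    [∀ i, SigmaFinite (ν i)] [∀ i, SigmaFinite (ρ i)] :
    Measure.pi (fun i => (ν i).prod (ρ i)) (patternEvent π) =
      increasingMass ν * increasingMass fun i => ρ (π.symm i) := by
  let e := MeasurableEquiv.arrowProdEquivProdArrow ℝ ℝ (Fin k)
  have he : MeasurePreserving e _ _ := measurePreserving_arrowProdEquivProdArrow ℝ ℝ (Fin k) ν ρ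
  have hπ := measurePreserving_comp_perm ρ π.symm
  calc Measure.pi (fun i => (ν i).prod (ρ i)) (patternEvent π)
      = Measure.pi (fun i => (ν i).prod (ρ i))
          (e ⁻¹' ({x | StrictMono x} ×ˢ ((· ∘ π.symm) ⁻¹' {y | StrictMono y}))) := rfl
    _ = Measure.pi ν {x | StrictMono x} *
          Measure.pi ρ ((· ∘ π.symm) ⁻¹' {y | StrictMono y}) := by
        rw [he.measure_preimage_equiv, Measure.prod_prod]
    _ = increasingMass ν * increasingMass fun i => ρ (π.symm i) := by
        rw [hπ.measure_preimage measurableSet_strictMono.nullMeasurableSet, increasingMass,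
          increasingMass]

section BlockMeasure

variable {ι κ : Type*} [Fintype ι] [Fintype κ]

/-- The mixture of the product measures `ν a × ρ b` with weights `w a b`, of which step permutons
are an instance. -/
noncomputable def blockMeasure (w : ι → κ → ℝ≥0) (ν : ι → Measure ℝ) (ρ : κ → Measure ℝ) :
    Measure (ℝ × ℝ) :=
  ∑ a, ∑ b, w a b • (ν a).prod (ρ b)

variable (w : ι → κ → ℝ≥0) {ν : ι → Measure ℝ} {ρ : κ → Measure ℝ}
  [∀ a, IsFiniteMeasure (ν a)] [∀ b, IsFiniteMeasure (ρ b)]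

instance : IsFiniteMeasure (blockMeasure w ν ρ) := by
  unfold blockMeasure
  infer_instance

variable {k : ℕ} (π : Equiv.Perm (Fin k))

theorem pi_blockMeasure_real_patternEvent :
    (Measure.pi fun _ : Fin k => blockMeasure w ν ρ).real (patternEvent π) =
      ∑ f : Fin k → ι, ∑ g : Fin k → κ, (∏ i, (w (f i) (g (π i)) : ℝ)) *
        ((increasingMass fun i => ν (f i)).toReal * (increasingMass fun i => ρ (g i)).toReal) := by
  classical
  calc (Measure.pi fun _ : Fin k => blockMeasure w ν ρ).real (patternEvent π)
      = ∑ h : Fin k → ι × κ, (∏ i, (w (h i).1 (h i).2 : ℝ)) *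
          ((increasingMass fun i => ν (h i).1).toReal *
            (increasingMass fun i => ρ (h (π.symm i)).2).toReal) := by
        simp only [blockMeasure, ← Fintype.sum_prod_type', pi_sum_smul]
        rw [measureReal_def, Measure.finsetSum_apply,
          ENNReal.toReal_sum fun _ _ => measure_ne_top _ _]
        simp only [Measure.smul_apply, pi_prod_patternEvent, ENNReal.smul_def, smul_eq_mul,
          ENNReal.toReal_mul, ENNReal.coe_toReal, NNReal.coe_prod]
    _ = ∑ f : Fin k → ι, ∑ g : Fin k → κ, (∏ i, (w (f i) (g i) : ℝ)) *
          ((increasingMass fun i => ν (f i)).toReal *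
            (increasingMass fun i => ρ (g (π.symm i))).toReal) := by
        rw [← (Equiv.arrowProdEquivProdArrow (Fin k) (fun _ => ι) fun _ => κ).symm.sum_comp,
          Fintype.sum_prod_type]
        rfl
    _ = _ := by
        refine Finset.sum_congr rfl fun f _ => ?_
        rw [← (π.symm.arrowCongr (Equiv.refl κ)).sum_comp]
        simp only [Equiv.arrowCongr_apply, Equiv.symm_symm, Equiv.coe_refl, Function.comp_apply,
          Equiv.apply_symm_apply, id_eq]

open scoped Classical in
theorem permutonDensity_blockMeasure [LinearOrder ι] [LinearOrder κ]
    [∀ a, NullSingletonClass (ν a)] [∀ b, NullSingletonClass (ρ b)]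
    (hν : IsOrderedFamily ν) (hρ : IsOrderedFamily ρ) :
    PermutonDensity π (blockMeasure w ν ρ) =
      k ! * ∑ f : Fin k → ι with Monotone f, ∑ g : Fin k → κ with Monotone g,
        (fiberFactorial f * fiberFactorial g : ℝ)⁻¹ *
          ∏ i, (w (f i) (g (π i)) * (ν (f i)).real Set.univ * (ρ (g (π i))).real Set.univ) := by
  rw [permutonDensity_eq_factorial_mul, pi_blockMeasure_real_patternEvent]
  simp only [Finset.sum_filter, toReal_increasingMass hν, toReal_increasingMass hρ]
  refine congrArg _ (Finset.sum_congr rfl fun f _ => ?_)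
  split_ifs with hf
  · refine Finset.sum_congr rfl fun g _ => ?_
    split_ifs with hg
    · rw [← Equiv.prod_comp π fun i => (ρ (g i)).real Set.univ]
      simp only [Finset.prod_mul_distrib]
      ring
    · ring
  · simp

end BlockMeasure

/-- Lebesgue measure on the `i`-th of the `n` intervals of equal length subdividing `[0, 1)`. -/
noncomputable def cellMeasure (n : ℕ) (i : Fin n) : Measure ℝ :=
  volume.restrict (Set.Ico ((i : ℝ) / n) (((i : ℝ) + 1) / n))

instance (n : ℕ) (i : Fin n) : IsFiniteMeasure (cellMeasure n i) := by
  unfold cellMeasure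
  infer_instance

instance (n : ℕ) (i : Fin n) : NullSingletonClass (cellMeasure n i) := by
  unfold cellMeasure
  infer_instance

theorem cellMeasure_real_univ (n : ℕ) (i : Fin n) :
    (cellMeasure n i).real Set.univ = (n : ℝ)⁻¹ := by
  have hle : (i : ℝ) / n ≤ ((i : ℝ) + 1) / n := by gcongr; simp
  rw [cellMeasure, measureReal_restrict_apply_univ, Real.volume_real_Ico_of_le hle]
  ring

theorem isOrderedFamily_cellMeasure (n : ℕ) : IsOrderedFamily (cellMeasure n) := by
  refine ⟨fun i => Set.Ico ((i : ℝ) / n) (((i : ℝ) + 1) / n),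
    fun i => ae_restrict_mem measurableSet_Ico, fun i j hij x hx y hy => ?_⟩
  have hsucc : (i : ℝ) + 1 ≤ j := mod_cast hij
  calc x ≤ ((i : ℝ) + 1) / n := hx.2.le
    _ ≤ j / n := by gcongr
    _ ≤ y := hy.1

theorem stepPermuton_eq_blockMeasure {n : ℕ} (A : Matrix (Fin n) (Fin n) ℝ) :
    stepPermuton A =
      blockMeasure (fun i j => (A i j * n).toNNReal) (cellMeasure n) (cellMeasure n) := by
  simp only [stepPermuton, blockMeasure, cellMeasure, Measure.prod_restrict,
    Measure.volume_eq_prod]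
  rfl

open scoped Classical in
theorem statement_11_general {n k : ℕ} (A : Matrix (Fin n) (Fin n) ℝ)
    (hA : ∀ i j, 0 ≤ A i j) (π : Equiv.Perm (Fin k)) :
    PermutonDensity π (stepPermuton A) =
      (Nat.factorial k : ℝ) / (n : ℝ) ^ k *
        ∑ f ∈ Finset.univ.filter (fun f : Fin k → Fin n => Monotone f),
          ∑ g ∈ Finset.univ.filter (fun g : Fin k → Fin n => Monotone g),
            (∏ m : Fin n,
                ((Nat.factorial (Finset.univ.filter fun i : Fin k => f i = m).card *
                  Nat.factorial (Finset.univ.filter fun i : Fin k => g i = m).card : ℕ) : ℝ))⁻¹ *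
              ∏ i : Fin k, A (f i) (g (π i)) := by
  have block_mass (i j : Fin n) : ((A i j * n).toNNReal : ℝ) * (cellMeasure n i).real Set.univ *
      (cellMeasure n j).real Set.univ = A i j / n := by
    rw [Real.coe_toNNReal _ (mul_nonneg (hA i j) n.cast_nonneg), cellMeasure_real_univ,
      cellMeasure_real_univ]
    rcases eq_or_ne (n : ℝ) 0 with hn | hn
    · simp [hn]
    · field_simp
  rw [stepPermuton_eq_blockMeasure, permutonDensity_blockMeasure _ _
    (isOrderedFamily_cellMeasure n) (isOrderedFamily_cellMeasure n), div_mul_eq_mul_div,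
    mul_div_assoc]
  simp only [block_mass, Finset.prod_div_distrib, Finset.prod_const, Finset.card_univ,
    Fintype.card_fin, fiberFactorial, Nat.cast_mul, Nat.cast_prod, Finset.prod_mul_distrib,
    mul_div_assoc, Finset.sum_div]

open scoped Classical in
theorem statement_11 {n k : ℕ} (A : Matrix (Fin n) (Fin n) ℝ)
    (hA : IsDoublyStochastic A) (π : Equiv.Perm (Fin k)) :
    PermutonDensity π (stepPermuton A) =
      (Nat.factorial k : ℝ) / (n : ℝ) ^ k *
        ∑ f ∈ Finset.univ.filter (fun f : Fin k → Fin n => Monotone f),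
          ∑ g ∈ Finset.univ.filter (fun g : Fin k → Fin n => Monotone g),
            (∏ m : Fin n,
                ((Nat.factorial (Finset.univ.filter fun i : Fin k => f i = m).card *
                  Nat.factorial (Finset.univ.filter fun i : Fin k => g i = m).card : ℕ) : ℝ))⁻¹ *
              ∏ i : Fin k, A (f i) (g (π i)) :=
  statement_11_general A hA.1 π
end
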